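/- Let n ≥ 1, d = 2^n, and let M be a positive integer with M ≤ max(2, 2^n − 1). There is no family of matrices {C_{P r F}}, indexed by permutations r = (r_1,…,r_{M+1}) of (1,…,M+1), each acting on P ⊗ (⊗_{s=1}^{M+1} I_s ⊗ O_s) ⊗ F (where every I_s, O_s ≅ ℂ^d, P = P_C ⊗ P_T, F = F_C ⊗ F_T with P_C, F_C ≅ ℂ² and P_T, F_T ≅ ℂ^d), satisfying the QC-CC conditions, such that the matrix C := Σ_r C_{P r F} satisfies C ∗ (A ⊗ ⋯ ⊗ A ⊗ B) = |S_SWITCH⟩⟨S_SWITCH| ∗ (A ⊗ B) for every Choi matrix A of a mixed unitary n-qubit channel (one copy of A inserted on each I_s ⊗ O_s for s = 1,…,M) and every B = |V⟩⟩⟨⟨V| with V an n-qubit unitary (inserted on I_{M+1} ⊗ O_{M+1}); on the left the link product contracts all slot systems I_s ⊗ O_s, and on the right it contracts I ⊗ O and I′ ⊗ O′, so both sides are operators on P ⊗ F. -/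

import Mathlib

/-!
The proof looks at amplitudes. Positivity gives `C_r = B_r† B_r`, and every row `c` of `B_r` defines
amplitudes `evM c p f X`, multilinear in the operators `X` inserted in the slots. Take `A` to be the
uniform mixture of unitaries `X_1, …, X_M`. Testing the simulation identity against a weight `w` on
`P ⊗ F` gives two weighted sums of squared moduli, of amplitudes of the process on one side and of
switch amplitudes `sW w X_k V` on the other (`Simulates.identity`). One term on the left inserts each
`X_k` exactly once. So a weight that kills the switch at every `(X_k, V)` kills the amplitude of every
row at `(X_1, …, X_M, V)` (`TUnit`, `Simulates.tUnit`).

The unitary group is Zariski dense in the matrices (`uzar_all`), and the matrices trace-orthogonal to a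
unitary are spanned by unitaries (`mem_span_unitary`). This extends the implication to arbitrary
matrices `X_k`, provided `V = x yᵀ` has rank one and `M ≤ d` (`TUnit.star`).

The QC-CC conditions enter only through `trace_change`. Let `w` be an initial part of the order of the slots.
If all amplitudes vanish for a rank-one operator with output vector `a ≠ 0` in the last slot of `w`,
whatever is inserted outside `w`, then they vanish for every output vector. Therefore only operators
used before `V` need to be constrained. If `y` annihilates them on the left, the block with control `0`
vanishes (`control_zero_vanish`). If moreover `x` annihilates them on the right, the block with
control `1` vanishes as well, and then it does so for any operator in the slot of `V`
(`control_one_vanish_same`, `control_one_vanish`).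

If `M ≤ d - 1`, any `M` matrix units annihilate common vectors `x0` and `y0`, so the block with control
`1` is identically zero (`control_one_eq_zero`). In the remaining case `M = d = 2` a parallelogram
identity at the diagonal matrices gives enough vanishing (`column_sum_eq_zero_qubit`). Both contradict
the simulation at identity operators (`not_simulates`).
-/

open scoped ComplexConjugate ComplexOrder

/-- Index of a slot `I_s ⊗ O_s` (two copies of `ℂ^d`). -/
abbrev DD (d : ℕ) := Fin d × Fin d
/-- Index of `P = P_C ⊗ P_T` (resp. `F = F_C ⊗ F_T`): `ℂ² ⊗ ℂ^d`. -/
abbrev PFq (d : ℕ) := Fin 2 × Fin d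
/-- Index of the full space `P ⊗ (⊗_{s=1}^K I_s ⊗ O_s) ⊗ F`. -/
abbrev FullQ (d K : ℕ) := PFq d × (Fin K → DD d) × PFq d
/-- Index of the space `P ⊗ I_{r_1} ⊗ O_{r_1} ⊗ ⋯ ⊗ I_{r_m} ⊗ O_{r_m} ⊗ I_{r_{m+1}}`
carrying a partial operator `C_{P r_1 … r_{m+1}}` for a word of length `m + 1`. -/
abbrev PartQ (d m : ℕ) := PFq d × (Fin m → DD d) × Fin d

/-- The QC-CC conditions for a family `{C_{P r F}}` indexed by permutations `r` of the
`K` slots: (i) each `C_{P r F}` is positive semidefinite, and there exists a family of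
partial operators `C_{P r_1 … r_m}` (indexed by words; here `Cp m w` is the operator for
the word `w` of length `m + 1`, acting on `P ⊗ I_{w 0} O_{w 0} ⊗ ⋯ ⊗ I_{w (m-1)} O_{w (m-1)}
⊗ I_{w m}`) satisfying the defining recursions
`C_{P r_1 … r_K} = (1/d) Tr_{O_{r_K} F}[C_{P r F}]` and
`C_{P r_1 … r_m} = (1/d) Σ_{r_{m+1}} Tr_{O_{r_m} I_{r_{m+1}}}[C_{P r_1 … r_m r_{m+1}}]`,
together with (ii) `Tr_F[C_{P r F}] = C_{P r_1 … r_K} ⊗ 1^{O_{r_K}}`,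
(iii) `Σ_{r_{m+1}} Tr_{I_{r_{m+1}}}[C_{P r_1 … r_m r_{m+1}}] = C_{P r_1 … r_m} ⊗ 1^{O_{r_m}}`
for all sequences of distinct indices, and (iv) `Σ_{r_1} Tr_{I_{r_1}}[C_{P r_1}] = 1^P`.
All equations are written entrywise; in (ii) and the top recursion, `q : Fin K → DD d`
lists the slot indices in the natural slot order and `w := r ∘ cast` is the word of the
permutation `r`. -/
def IsQCCC (d K : ℕ) (Cfam : Equiv.Perm (Fin K) → Matrix (FullQ d K) (FullQ d K) ℂ) :
    Prop :=
  (∀ r, (Cfam r).PosSemidef) ∧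
  ∃ Cp : (m : ℕ) → (Fin (m + 1) → Fin K) → Matrix (PartQ d m) (PartQ d m) ℂ,
    -- top recursion: `C_{P r_1 … r_K} = (1/d) Tr_{O_{r_K} F}[C_{P r F}]`
    (∀ (r : Equiv.Perm (Fin K)) (mm : ℕ) (h : mm + 1 = K)
        (p p' : PFq d) (q q' : Fin K → DD d),
      Cp mm (fun s => r (Fin.cast h s))
          (p, fun s : Fin mm => q (r (Fin.cast h s.castSucc)),
            (q (r (Fin.cast h (Fin.last mm)))).1)
          (p', fun s : Fin mm => q' (r (Fin.cast h s.castSucc)),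
            (q' (r (Fin.cast h (Fin.last mm)))).1) =
        (d : ℂ)⁻¹ * ∑ o : Fin d, ∑ f : PFq d,
          Cfam r
            (p, Function.update q (r (Fin.cast h (Fin.last mm)))
              ((q (r (Fin.cast h (Fin.last mm)))).1, o), f)
            (p', Function.update q' (r (Fin.cast h (Fin.last mm)))
              ((q' (r (Fin.cast h (Fin.last mm)))).1, o), f)) ∧
    -- condition (ii): `Tr_F[C_{P r F}] = C_{P r_1 … r_K} ⊗ 1^{O_{r_K}}`
    (∀ (r : Equiv.Perm (Fin K)) (mm : ℕ) (h : mm + 1 = K)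
        (p p' : PFq d) (q q' : Fin K → DD d),
      (∑ f : PFq d, Cfam r (p, q, f) (p', q', f)) =
        Cp mm (fun s => r (Fin.cast h s))
          (p, fun s : Fin mm => q (r (Fin.cast h s.castSucc)),
            (q (r (Fin.cast h (Fin.last mm)))).1)
          (p', fun s : Fin mm => q' (r (Fin.cast h s.castSucc)),
            (q' (r (Fin.cast h (Fin.last mm)))).1) *
        (if (q (r (Fin.cast h (Fin.last mm)))).2 = (q' (r (Fin.cast h (Fin.last mm)))).2
          then 1 else 0)) ∧
    -- recursion: `C_{P u} = (1/d) Σ_{x ∉ u} Tr_{O_{u_last} I_x}[C_{P u x}]`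
    (∀ (mm : ℕ), mm + 2 ≤ K → ∀ (u : Fin (mm + 1) → Fin K), Function.Injective u →
      ∀ (p p' : PFq d) (g g' : Fin mm → DD d) (iL iL' : Fin d),
      Cp mm u (p, g, iL) (p', g', iL') =
        (d : ℂ)⁻¹ * ∑ x : Fin K, (if ∃ y, u y = x then 0 else
          ∑ o : Fin d, ∑ ii : Fin d,
            Cp (mm + 1) (Fin.snoc u x)
              (p, Fin.snoc g ((iL, o) : DD d), ii)
              (p', Fin.snoc g' ((iL', o) : DD d), ii))) ∧
    -- condition (iii): `Σ_{x ∉ u} Tr_{I_x}[C_{P u x}] = C_{P u} ⊗ 1^{O_{u_last}}`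
    (∀ (mm : ℕ), mm + 2 ≤ K → ∀ (u : Fin (mm + 1) → Fin K), Function.Injective u →
      ∀ (p p' : PFq d) (g g' : Fin mm → DD d) (iL iL' : Fin d) (o o' : Fin d),
      (∑ x : Fin K, if ∃ y, u y = x then 0 else
          ∑ ii : Fin d, Cp (mm + 1) (Fin.snoc u x)
            (p, Fin.snoc g ((iL, o) : DD d), ii)
            (p', Fin.snoc g' ((iL', o') : DD d), ii)) =
        Cp mm u (p, g, iL) (p', g', iL') * (if o = o' then 1 else 0)) ∧
    -- condition (iv): `Σ_{r_1} Tr_{I_{r_1}}[C_{P r_1}] = 1^P`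
    (∀ p p' : PFq d,
      (∑ x : Fin K, ∑ ii : Fin d,
          Cp 0 (fun _ => x)
            (p, fun s : Fin 0 => s.elim0, ii)
            (p', fun s : Fin 0 => s.elim0, ii)) =
        if p = p' then 1 else 0)

/-- Component of the switch Choi vector `|S_SWITCH⟩` at `P`-index `p`, `(I, O)`-index `io`,
`(I′, O′)`-index `jo` and `F`-index `f`. -/
noncomputable def swVecd {d : ℕ} (p : PFq d) (io jo : DD d) (f : PFq d) : ℂ :=
  (if p.1 = 0 ∧ f.1 = 0 ∧ p.2 = io.1 ∧ io.2 = jo.1 ∧ jo.2 = f.2 then 1 else 0) +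
  (if p.1 = 1 ∧ f.1 = 1 ∧ p.2 = jo.1 ∧ jo.2 = io.1 ∧ io.2 = f.2 then 1 else 0)

/-- Choi vector `|A⟩⟩ = Σ_i e_i ⊗ A e_i`: component at `(i, j)` is `A j i`. -/
noncomputable def choiVd {d : ℕ} (A : Matrix (Fin d) (Fin d) ℂ) : DD d → ℂ :=
  fun x => A x.2 x.1

/-- `A` is the Choi matrix of a mixed unitary channel:
`A = Σ_j p_j |U_j⟩⟩⟨⟨U_j|` with `p_j ≥ 0`, `Σ_j p_j = 1`, `U_j` unitary. -/
def IsMixedUnitaryChoi {d : ℕ} (A : Matrix (DD d) (DD d) ℂ) : Prop :=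
  ∃ (m : ℕ) (p : Fin m → ℝ) (U : Fin m → Matrix (Fin d) (Fin d) ℂ),
    (∀ j, 0 ≤ p j) ∧ (∑ j, p j = 1) ∧
    (∀ j, U j ∈ Matrix.unitaryGroup (Fin d) ℂ) ∧
    A = ∑ j, (p j : ℂ) • Matrix.vecMulVec (choiVd (U j)) (star (choiVd (U j)))

/-- The matrix link product `C ∗ (A^{⊗M} ⊗ B)`, written entrywise: one copy of `A` is
inserted on each slot `I_s ⊗ O_s`, `s = 1, …, M`, and `B` on `I_{M+1} ⊗ O_{M+1}`; all slot
systems are contracted, leaving an operator on `P ⊗ F`. -/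
noncomputable def linkMatMB {d M : ℕ}
    (C : Matrix (FullQ d (M + 1)) (FullQ d (M + 1)) ℂ) (A B : Matrix (DD d) (DD d) ℂ) :
    Matrix (PFq d × PFq d) (PFq d × PFq d) ℂ :=
  fun x y => ∑ q : Fin (M + 1) → DD d, ∑ q' : Fin (M + 1) → DD d,
    C (x.1, q, x.2) (y.1, q', y.2) *
      (∏ i : Fin M, A (q i.castSucc) (q' i.castSucc)) *
      B (q (Fin.last M)) (q' (Fin.last M))

/-- The matrix link product `|S_SWITCH⟩⟨S_SWITCH| ∗ (A ⊗ B)` (with `A` inserted on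
`I ⊗ O` and `B` on `I′ ⊗ O′`), an operator on `P ⊗ F`. -/
noncomputable def switchMat {d : ℕ} (A B : Matrix (DD d) (DD d) ℂ) :
    Matrix (PFq d × PFq d) (PFq d × PFq d) ℂ :=
  fun x y => ∑ io : DD d, ∑ io' : DD d, ∑ jo : DD d, ∑ jo' : DD d,
    swVecd x.1 io jo x.2 * conj (swVecd y.1 io' jo' y.2) * A io io' * B jo jo'

/-! ### Zariski density of the unitary group -/

/-- `P` restricts to a polynomial on every affine complex line. This is all of polynomiality that
the density argument uses, and it is closed under sums, products and affine substitutions. -/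
def LinePoly {E : Type*} [AddCommGroup E] [Module ℂ E] (P : E → ℂ) : Prop :=
  ∀ A B : E, ∃ p : Polynomial ℂ, ∀ z : ℂ, P (A + z • B) = p.eval z

namespace LinePoly
variable {E : Type*} [AddCommGroup E] [Module ℂ E]

lemma const (a : ℂ) : LinePoly (fun _ : E => a) := fun _ _ => ⟨Polynomial.C a, by simp⟩

lemma linear (f : E →ₗ[ℂ] ℂ) : LinePoly (fun x => f x) := fun A B =>
  ⟨Polynomial.C (f A) + Polynomial.X * Polynomial.C (f B), by intro z; simp; ring⟩

lemma add {P Q : E → ℂ} (hP : LinePoly P) (hQ : LinePoly Q) :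
    LinePoly (fun x => P x + Q x) := fun A B => by
  obtain ⟨p, hp⟩ := hP A B
  obtain ⟨q, hq⟩ := hQ A B
  exact ⟨p + q, by intro z; simp [hp, hq]⟩

lemma mul {P Q : E → ℂ} (hP : LinePoly P) (hQ : LinePoly Q) :
    LinePoly (fun x => P x * Q x) := fun A B => by
  obtain ⟨p, hp⟩ := hP A B
  obtain ⟨q, hq⟩ := hQ A B
  exact ⟨p * q, by intro z; simp [hp, hq]⟩

lemma sub {P Q : E → ℂ} (hP : LinePoly P) (hQ : LinePoly Q) :
    LinePoly (fun x => P x - Q x) := by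
  have := hP.add ((const (-1)).mul hQ)
  simpa [sub_eq_add_neg] using this

lemma sum {ι : Type*} (s : Finset ι) {P : ι → E → ℂ} (hP : ∀ i, LinePoly (P i)) :
    LinePoly (fun x => ∑ i ∈ s, P i x) := by
  classical
  induction s using Finset.induction_on with
  | empty => simpa using const (E := E) 0
  | insert a s ha ih => simpa [Finset.sum_insert ha] using (hP a).add ih

lemma prod {ι : Type*} (s : Finset ι) {P : ι → E → ℂ} (hP : ∀ i, LinePoly (P i)) :
    LinePoly (fun x => ∏ i ∈ s, P i x) := by
  classical
  induction s using Finset.induction_on with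
  | empty => simpa using const (E := E) 1
  | insert a s ha ih => simpa [Finset.prod_insert ha] using (hP a).mul ih

lemma comp_affine {E' : Type*} [AddCommGroup E'] [Module ℂ E'] {P : E → ℂ} (hP : LinePoly P)
    (f : E' →ₗ[ℂ] E) (c : E) : LinePoly (fun x => P (f x + c)) := fun A B => by
  obtain ⟨p, hp⟩ := hP (f A + c) (f B)
  refine ⟨p, fun z => ?_⟩
  rw [← hp z]
  simp only [map_add, map_smul]
  congr 1
  abel

lemma comp_linear {E' : Type*} [AddCommGroup E'] [Module ℂ E'] {P : E → ℂ} (hP : LinePoly P)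
    (f : E' →ₗ[ℂ] E) : LinePoly (fun x => P (f x)) := by
  simpa using hP.comp_affine f 0

lemma eq_zero_of_infinite {P : E → ℂ} (hP : LinePoly P) (A B : E) {S : Set ℂ} (hS : S.Infinite)
    (h : ∀ z ∈ S, P (A + z • B) = 0) (z : ℂ) : P (A + z • B) = 0 := by
  obtain ⟨p, hp⟩ := hP A B
  have : p = 0 := Polynomial.eq_zero_of_infinite_isRoot p
    (hS.mono fun z hz => by simp [Polynomial.IsRoot, ← hp z, h z hz])
  simp [hp, this]

end LinePoly

section density
variable {d : ℕ}

/-- `A` lies in the Zariski closure of the unitary group, tested against the functions that are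
polynomial on every line. -/
def UZar (A : Matrix (Fin d) (Fin d) ℂ) : Prop :=
  ∀ P : Matrix (Fin d) (Fin d) ℂ → ℂ, LinePoly P →
    (∀ U ∈ Matrix.unitaryGroup (Fin d) ℂ, P U = 0) → P A = 0

lemma UZar.of_unitary {U : Matrix (Fin d) (Fin d) ℂ} (hU : U ∈ Matrix.unitaryGroup (Fin d) ℂ) : UZar U :=
  fun _ _ h => h U hU

lemma UZar.mul {A B : Matrix (Fin d) (Fin d) ℂ} (hA : UZar A) (hB : UZar B) : UZar (A * B) := by
  intro P hP h
  refine hA (fun X => P (X * B)) (hP.comp_linear (LinearMap.mulRight ℂ B)) fun U hU => ?_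
  exact hB (fun X => P (U * X)) (hP.comp_linear (LinearMap.mulLeft ℂ U))
    fun W hW => h _ (mul_mem hU hW)

lemma infinite_circle : {z : ℂ | star z * z = 1}.Infinite := by
  refine Set.Infinite.of_image Complex.re ((Set.Ioo_infinite (zero_lt_one' ℝ)).mono ?_)
  rintro t ⟨h0, h1⟩
  refine ⟨⟨t, Real.sqrt (1 - t ^ 2)⟩, ?_, rfl⟩
  have h : Real.sqrt (1 - t ^ 2) * Real.sqrt (1 - t ^ 2) = 1 - t ^ 2 :=
    Real.mul_self_sqrt (by nlinarith)
  apply Complex.ext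
  · simp [h]; ring
  · simp; ring

lemma diagonal_mem_unitary {v : Fin d → ℂ} (hv : ∀ i, star (v i) * v i = 1) :
    Matrix.diagonal v ∈ Matrix.unitaryGroup (Fin d) ℂ := by
  rw [Matrix.mem_unitaryGroup_iff', Matrix.star_eq_conjTranspose, Matrix.diagonal_conjTranspose,
    Matrix.diagonal_mul_diagonal, ← Matrix.diagonal_one]
  congr 1
  funext i
  exact hv i

lemma UZar.diagonal_update (i : Fin d) (z : ℂ) :
    UZar (Matrix.diagonal (Function.update (1 : Fin d → ℂ) i z)) := by
  intro P hP h
  have key : ∀ z : ℂ, Matrix.diagonal (Function.update (1 : Fin d → ℂ) i z) =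
      Matrix.diagonal (Function.update (1 : Fin d → ℂ) i 0) +
        z • Matrix.diagonal (Pi.single i (1 : ℂ)) := by
    intro z
    rw [← Matrix.diagonal_smul, Matrix.diagonal_add]
    congr 1
    funext j
    by_cases hj : j = i
    · subst hj; simp
    · simp [hj]
  rw [key]
  refine hP.eq_zero_of_infinite _ _ infinite_circle (fun z hz => ?_) z
  rw [← key]
  refine h _ (diagonal_mem_unitary fun j => ?_)
  by_cases hj : j = i
  · subst hj; simpa using hz
  · simp [hj]

lemma UZar.diagonal (v : Fin d → ℂ) : UZar (Matrix.diagonal v) := by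
  classical
  have : ∀ s : Finset (Fin d), UZar (Matrix.diagonal fun i => if i ∈ s then v i else 1) := by
    intro s
    induction s using Finset.induction_on with
    | empty => simpa using UZar.of_unitary (one_mem _)
    | insert a s ha ih =>
      have h2 := (UZar.diagonal_update a (v a)).mul ih
      rw [Matrix.diagonal_mul_diagonal] at h2
      have e : (fun i => if i ∈ insert a s then v i else 1) =
          fun i => Function.update (1 : Fin d → ℂ) a (v a) i * if i ∈ s then v i else 1 := by
        funext i
        by_cases hi : i = a
        · subst hi; simp [ha]
        · simp [hi]
      rw [e]
      exact h2
  simpa using this Finset.univ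

lemma UZar.of_isHermitian {H : Matrix (Fin d) (Fin d) ℂ} (hH : H.IsHermitian) : UZar H := by
  rw [hH.spectral_theorem]
  rw [Unitary.conjStarAlgAut_apply]
  exact ((UZar.of_unitary (SetLike.coe_mem _)).mul (UZar.diagonal _)).mul
    (UZar.of_unitary (Unitary.star_mem (SetLike.coe_mem _)))

/-- For `c = 1` a transvection is a product of two Hermitian matrices; the general one is
conjugate to it by a diagonal matrix. -/
lemma UZar.transvection {i j : Fin d} (hij : i ≠ j) (c : ℂ) : UZar (Matrix.transvection i j c) := by
  have hsw : Matrix.swap ℂ i j ∈ Matrix.unitaryGroup (Fin d) ℂ := by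
    rw [Matrix.mem_unitaryGroup_iff, Matrix.star_eq_conjTranspose, Matrix.conjTranspose_swap,
      Matrix.swap_mul_self]
  -- `1 + E_ij` is the product of the Hermitian matrices `swap i j` and `swap i j + E_jj`
  have h1 : UZar (Matrix.transvection i j (1 : ℂ)) := by
    have e : Matrix.transvection i j (1 : ℂ) =
        Matrix.swap ℂ i j * (Matrix.swap ℂ i j + Matrix.single j j 1) := by
      rw [mul_add, Matrix.swap_mul_self, Matrix.transvection]
      congr 1
      ext a b
      by_cases hai : a = i
      · subst hai
        rw [Matrix.swap_mul_apply_left]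
        simp [Matrix.single_apply]
      · by_cases haj : a = j
        · subst haj
          rw [Matrix.swap_mul_apply_right]
          simp [hij, hij.symm]
        · rw [Matrix.swap_mul_of_ne hai haj]
          simp [Ne.symm hai, Ne.symm haj]
    rw [e]
    refine (UZar.of_unitary hsw).mul (UZar.of_isHermitian ?_)
    refine Matrix.IsHermitian.add (Matrix.conjTranspose_swap i j) ?_
    simp [Matrix.IsHermitian]
  by_cases hc : c = 0
  · subst hc
    rw [Matrix.transvection_zero]
    exact UZar.of_unitary (one_mem _)
  have e : Matrix.transvection i j c = Matrix.diagonal (Function.update (1 : Fin d → ℂ) i c) *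
      Matrix.transvection i j 1 * Matrix.diagonal (Function.update (1 : Fin d → ℂ) i c⁻¹) := by
    ext a b
    rw [Matrix.mul_diagonal, Matrix.diagonal_mul]
    by_cases ha : a = i
    · subst ha
      by_cases hb : b = a
      · subst hb; simp [Matrix.transvection, hij.symm, hc]
      · simp [Matrix.transvection, Matrix.single_apply, hb, Ne.symm hb]
    · by_cases hb : b = i
      · subst hb; simp [Matrix.transvection, ha, Ne.symm ha]
      · simp [Matrix.transvection, ha, hb, Ne.symm ha]
  rw [e]
  exact ((UZar.diagonal _).mul h1).mul (UZar.diagonal _)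

/-- The unitary group is Zariski dense in all complex matrices: the closure is multiplicative and
contains the diagonal matrices and the transvections. -/
theorem uzar_all (A : Matrix (Fin d) (Fin d) ℂ) : UZar A := by
  refine Matrix.diagonal_transvection_induction UZar A (fun D _ => UZar.diagonal D) ?_ ?_
  · intro t; exact UZar.transvection t.hij t.c
  · intro A B hA hB; exact hA.mul hB
end density

section evaluation
variable {d K M : ℕ}

/-! ### Amplitudes of a process vector and of the switch -/

/-- The amplitude from `p` to `f` of the process vector `c` when the operators `X s` are inserted
in the slots. A slot index `(i, o)` consists of the slot input `i` and the slot output `o`, so it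
is contracted with the entry `X s o i`. -/
noncomputable def evM (c : FullQ d K → ℂ) (p f : PFq d) :
    MultilinearMap ℂ (fun _ : Fin K => Matrix (Fin d) (Fin d) ℂ) ℂ :=
  ∑ q : Fin K → DD d, c (p, q, f) • (MultilinearMap.mkPiAlgebra ℂ (Fin K) ℂ).compLinearMap
    (fun s => Matrix.entryLinearMap ℂ ℂ (q s).2 (q s).1)

lemma evM_apply (c : FullQ d K → ℂ) (p f : PFq d) (X : Fin K → Matrix (Fin d) (Fin d) ℂ) :
    evM c p f X = ∑ q : Fin K → DD d, c (p, q, f) * ∏ s, X s (q s).2 (q s).1 := by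
  simp [evM]

/-- The amplitudes `evM c p f X`, tested against the weights `w p f`. -/
noncomputable def evw (c : FullQ d K → ℂ) (w : PFq d → PFq d → ℂ)
    (X : Fin K → Matrix (Fin d) (Fin d) ℂ) : ℂ :=
  ∑ p, ∑ f, w p f * evM c p f X

/-- `evw c w` as a multilinear map in the inserted operators. -/
noncomputable def evwM (c : FullQ d K → ℂ) (w : PFq d → PFq d → ℂ) :
    MultilinearMap ℂ (fun _ : Fin K => Matrix (Fin d) (Fin d) ℂ) ℂ :=
  ∑ p, ∑ f, w p f • evM c p f

lemma evwM_apply (c : FullQ d K → ℂ) (w : PFq d → PFq d → ℂ)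
    (X : Fin K → Matrix (Fin d) (Fin d) ℂ) : evwM c w X = evw c w X := by
  simp [evwM, evw]

lemma evw_add (c : FullQ d K → ℂ) (w w' : PFq d → PFq d → ℂ)
    (X : Fin K → Matrix (Fin d) (Fin d) ℂ) :
    evw c (fun p f => w p f + w' p f) X = evw c w X + evw c w' X := by
  simp [evw, add_mul, Finset.sum_add_distrib]

lemma LinePoly.evM {E : Type*} [AddCommGroup E] [Module ℂ E] (c : FullQ d K → ℂ) (p f : PFq d)
    {X : E → Fin K → Matrix (Fin d) (Fin d) ℂ} (hX : ∀ s i j, LinePoly fun z => X z s i j) :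
    LinePoly fun z => evM c p f (X z) := by
  simp only [evM_apply]
  exact LinePoly.sum _ fun q => (LinePoly.const _).mul (LinePoly.prod _ fun s => hX _ _ _)

lemma LinePoly.evw {E : Type*} [AddCommGroup E] [Module ℂ E] (c : FullQ d K → ℂ)
    {w : E → PFq d → PFq d → ℂ} (hw : ∀ p f, LinePoly fun z => w z p f)
    {X : E → Fin K → Matrix (Fin d) (Fin d) ℂ} (hX : ∀ s i j, LinePoly fun z => X z s i j) :
    LinePoly fun z => evw c (w z) (X z) :=
  LinePoly.sum _ fun p => LinePoly.sum _ fun f => (hw p f).mul (LinePoly.evM c p f hX)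

/-- The family inserting `A k` in the first `M` slots and `V` in the last one. -/
def sn (A : Fin M → Matrix (Fin d) (Fin d) ℂ) (V : Matrix (Fin d) (Fin d) ℂ) :
    Fin (M + 1) → Matrix (Fin d) (Fin d) ℂ :=
  Fin.snoc (α := fun _ => Matrix (Fin d) (Fin d) ℂ) A V

@[simp] lemma sn_last (A : Fin M → Matrix (Fin d) (Fin d) ℂ) (V : Matrix (Fin d) (Fin d) ℂ) :
    sn A V (Fin.last M) = V := by simp [sn]

@[simp] lemma sn_castSucc (A : Fin M → Matrix (Fin d) (Fin d) ℂ) (V : Matrix (Fin d) (Fin d) ℂ)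
    (k : Fin M) : sn A V k.castSucc = A k := by simp [sn]

lemma sn_self (X : Fin (M + 1) → Matrix (Fin d) (Fin d) ℂ) :
    sn (fun k => X k.castSucc) (X (Fin.last M)) = X := by
  funext s
  refine Fin.lastCases ?_ (fun k => ?_) s <;> simp

/-- The amplitudes of the switch of `A` and `V`, tested against the weights `w`: it applies `V * A`
when the control is `0` and `A * V` when the control is `1`. -/
noncomputable def sW (w : PFq d → PFq d → ℂ) (A V : Matrix (Fin d) (Fin d) ℂ) : ℂ :=
  ∑ p : PFq d, ∑ f : PFq d, w p f *
    ((if p.1 = 0 ∧ f.1 = 0 then (V * A) f.2 p.2 else 0) +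
      (if p.1 = 1 ∧ f.1 = 1 then (A * V) f.2 p.2 else 0))

/-- The block of `w` in which both control qubits are `0`, indexed by input and output target. -/
def W0 (w : PFq d → PFq d → ℂ) : Matrix (Fin d) (Fin d) ℂ := Matrix.of fun p f => w (0, p) (0, f)
/-- The block of `w` in which both control qubits are `1`, indexed by input and output target. -/
def W1 (w : PFq d → PFq d → ℂ) : Matrix (Fin d) (Fin d) ℂ := Matrix.of fun p f => w (1, p) (1, f)

lemma sW_eq (w : PFq d → PFq d → ℂ) (A V : Matrix (Fin d) (Fin d) ℂ) :
    sW w A V = ((W0 w * V + V * W1 w) * A).trace := by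
  have h1 : ((W0 w * V + V * W1 w) * A).trace =
      (W0 w * (V * A)).trace + (W1 w * (A * V)).trace := by
    rw [add_mul, Matrix.trace_add, mul_assoc, mul_assoc, Matrix.trace_mul_comm V, mul_assoc]
  have h2 : ∀ W B : Matrix (Fin d) (Fin d) ℂ, (W * B).trace = ∑ p, ∑ f, W p f * B f p :=
    fun W B => by simp [Matrix.trace, Matrix.mul_apply]
  rw [h1, h2, h2]
  simp [sW, Fintype.sum_prod_type, W0, W1]

/-- A multilinear form vanishing on `∏ s, T s` vanishes on the product of the spans. -/
lemma ml_span {ι E : Type*} [Finite ι] [AddCommGroup E] [Module ℂ E]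
    (Φ : MultilinearMap ℂ (fun _ : ι => E) ℂ) (T : ι → Set E)
    (h : ∀ Y : ι → E, (∀ s, Y s ∈ T s) → Φ Y = 0)
    (Y : ι → E) (hY : ∀ s, Y s ∈ Submodule.span ℂ (T s)) : Φ Y = 0 := by
  classical
  have := Fintype.ofFinite ι
  have key : ∀ S : Finset ι, ∀ Y : ι → E, (∀ s ∈ S, Y s ∈ Submodule.span ℂ (T s)) →
      (∀ s ∉ S, Y s ∈ T s) → Φ Y = 0 := by
    intro S
    induction S using Finset.induction_on with
    | empty => intro Y _ h2; exact h Y fun s => h2 s (by simp)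
    | insert a S ha ih =>
      intro Y h1 h2
      have : ∀ x ∈ Submodule.span ℂ (T a), Φ (Function.update Y a x) = 0 := by
        intro x hx
        induction hx using Submodule.span_induction with
        | mem x hx =>
          refine ih _ (fun s hs => ?_) (fun s hs => ?_)
          · have : s ≠ a := by rintro rfl; exact ha hs
            simpa [this] using h1 s (by simp [hs])
          · by_cases hsa : s = a
            · subst hsa; simpa using hx
            · simpa [hsa] using h2 s (by simp [hsa, hs])
        | zero => exact Φ.map_coord_zero a (by simp)
        | add x y _ _ hx hy => rw [Φ.map_update_add, hx, hy, add_zero]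
        | smul z x _ hx => rw [Φ.map_update_smul, hx, smul_zero]
      simpa using this (Y a) (h1 a (by simp))
  exact key Finset.univ Y (fun s _ => hY s) (by simp)

end evaluation

/-! ### Spans of unitaries -/

section span
variable {d : ℕ}

/-- An off-diagonal matrix unit is half the difference of two signed cyclic shifts, which are
unitary with zero diagonal. -/
lemma single_mem_span_unitary {i j : Fin d} (hij : i ≠ j) :
    Matrix.single i j (1 : ℂ) ∈ Submodule.span ℂ
      {U : Matrix (Fin d) (Fin d) ℂ | U ∈ Matrix.unitaryGroup (Fin d) ℂ ∧ U.trace = 0} := by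
  have : NeZero d := ⟨by rintro rfl; exact i.elim0⟩
  -- the cyclic shift sending `i` to `j`; it has no fixed point, so its permutation matrix has
  -- zero diagonal
  let σ : Equiv.Perm (Fin d) := Equiv.addRight (j - i)
  have hσ : ∀ k, σ k ≠ k := by
    intro k h
    have : k + (j - i) = k := h
    rw [add_eq_left, sub_eq_zero] at this
    exact hij this.symm
  have hperm : ∀ e : Fin d → ℂ, (∀ k, star (e k) * e k = 1) →
      Matrix.diagonal e * σ.permMatrix ℂ ∈
      {U : Matrix (Fin d) (Fin d) ℂ | U ∈ Matrix.unitaryGroup (Fin d) ℂ ∧ U.trace = 0} := by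
    intro e he
    refine ⟨mul_mem (diagonal_mem_unitary he) ?_, ?_⟩
    · rw [Matrix.mem_unitaryGroup_iff, Matrix.star_eq_conjTranspose, Matrix.conjTranspose_permMatrix,
        ← Matrix.permMatrix_mul]
      simp
    · rw [Matrix.trace]
      refine Finset.sum_eq_zero fun k _ => ?_
      simp [Matrix.diag, Matrix.diagonal_mul, Equiv.Perm.permMatrix, PEquiv.toMatrix_apply,
        Equiv.toPEquiv_apply, (hσ k)]
  have h1 := hperm 1 (by simp)
  have h2 := hperm (Function.update 1 i (-1)) (by
    intro k; by_cases hk : k = i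
    · subst hk; simp
    · simp [hk])
  have e : Matrix.single i j (1 : ℂ) = (1 / 2 : ℂ) • (Matrix.diagonal (1 : Fin d → ℂ) * σ.permMatrix ℂ) -
      (1 / 2 : ℂ) • (Matrix.diagonal (Function.update (1 : Fin d → ℂ) i (-1)) * σ.permMatrix ℂ) := by
    ext a b
    by_cases ha : a = i
    · subst ha
      have : σ a = j := by simp [σ]
      simp [Matrix.diagonal_mul, Equiv.Perm.permMatrix, PEquiv.toMatrix_apply,
        Equiv.toPEquiv_apply, this, Matrix.single_apply]
      split_ifs <;> norm_num
    · simp [Matrix.diagonal_mul, ha, Ne.symm ha]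
  rw [e]
  exact Submodule.sub_mem _ (Submodule.smul_mem _ _ (Submodule.subset_span h1))
    (Submodule.smul_mem _ _ (Submodule.subset_span h2))

/-- The difference of two diagonal matrix units is a multiple of the difference of two traceless
diagonal unitaries whose entries are the `d`-th roots of unity, in two orders differing by a
transposition. -/
lemma single_sub_mem_span_unitary {i j : Fin d} (hij : i ≠ j) :
    Matrix.single i i (1 : ℂ) - Matrix.single j j 1 ∈ Submodule.span ℂ
      {U : Matrix (Fin d) (Fin d) ℂ | U ∈ Matrix.unitaryGroup (Fin d) ℂ ∧ U.trace = 0} := by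
  have : NeZero d := ⟨by rintro rfl; exact i.elim0⟩
  have hd : 1 < d := by
    by_contra h
    apply hij; ext; have := i.2; have := j.2; omega
  obtain ⟨ζ, hζ⟩ : ∃ ζ : ℂ, IsPrimitiveRoot ζ d := ⟨_, Complex.isPrimitiveRoot_exp d (NeZero.ne d)⟩
  have hnorm : star ζ * ζ = 1 := by
    have h1 := hζ.norm'_eq_one (NeZero.ne d)
    rw [mul_comm, Complex.star_def, Complex.mul_conj, Complex.normSq_eq_norm_sq, h1]; simp
  have hsum : ∑ k : Fin d, ζ ^ (k : ℕ) = 0 := by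
    rw [Fin.sum_univ_eq_sum_range (fun k => ζ ^ k)]
    exact hζ.geom_sum_eq_zero hd
  have hmem : ∀ τ : Equiv.Perm (Fin d), Matrix.diagonal (fun k => ζ ^ ((τ k : Fin d) : ℕ)) ∈
      {U : Matrix (Fin d) (Fin d) ℂ | U ∈ Matrix.unitaryGroup (Fin d) ℂ ∧ U.trace = 0} := by
    intro τ
    refine ⟨diagonal_mem_unitary fun k => ?_, ?_⟩
    · rw [star_pow, ← mul_pow, hnorm, one_pow]
    · rw [Matrix.trace_diagonal, Equiv.sum_comp τ (fun k : Fin d => ζ ^ (k : ℕ)), hsum]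
  have hne : ζ ^ (i : ℕ) - ζ ^ (j : ℕ) ≠ 0 := by
    rw [sub_ne_zero]
    intro h
    exact hij (Fin.ext (hζ.pow_inj i.2 j.2 h))
  have e : Matrix.single i i (1 : ℂ) - Matrix.single j j 1 = (ζ ^ (i : ℕ) - ζ ^ (j : ℕ))⁻¹ •
      (Matrix.diagonal (fun k => ζ ^ (((1 : Equiv.Perm (Fin d)) k : Fin d) : ℕ)) -
        Matrix.diagonal (fun k => ζ ^ ((Equiv.swap i j k : Fin d) : ℕ))) := by
    rw [eq_inv_smul_iff₀ hne, ← Matrix.diagonal_single, ← Matrix.diagonal_single, Matrix.diagonal_sub,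
      Matrix.diagonal_sub, ← Matrix.diagonal_smul]
    congr 1
    funext k
    by_cases hki : k = i
    · subst hki; simp [hij]
    · by_cases hkj : k = j
      · subst hkj; simp [hki]
      · simp [hki, hkj, Equiv.swap_apply_of_ne_of_ne]
  rw [e]
  exact Submodule.smul_mem _ _ (Submodule.sub_mem _ (Submodule.subset_span (hmem _))
    (Submodule.subset_span (hmem _)))

lemma traceless_mem_span {A : Matrix (Fin d) (Fin d) ℂ} (hA : A.trace = 0) :
    A ∈ Submodule.span ℂ
      {U : Matrix (Fin d) (Fin d) ℂ | U ∈ Matrix.unitaryGroup (Fin d) ℂ ∧ U.trace = 0} := by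
  rcases Nat.eq_zero_or_pos d with rfl | hd
  · have : A = 0 := Subsingleton.elim _ _
    rw [this]; exact Submodule.zero_mem _
  have : NeZero d := ⟨hd.ne'⟩
  have e : A = ∑ i, ∑ j, if i = j then A i i • (Matrix.single i i (1 : ℂ) - Matrix.single 0 0 1)
      else A i j • Matrix.single i j 1 := by
    conv_lhs => rw [Matrix.matrix_eq_sum_single A]
    have h0 : ∑ i, A i i • Matrix.single (0 : Fin d) (0 : Fin d) (1 : ℂ) = 0 := by
      rw [← Finset.sum_smul]
      have : ∑ i, A i i = 0 := hA
      rw [this, zero_smul]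
    rw [← sub_zero (∑ i, ∑ j, Matrix.single i j (A i j)), ← h0, ← Finset.sum_sub_distrib]
    refine Finset.sum_congr rfl fun i _ => ?_
    rw [← Finset.add_sum_erase _ _ (Finset.mem_univ i), ← Finset.add_sum_erase Finset.univ
      (fun j => if i = j then _ else _) (Finset.mem_univ i)]
    have : ∑ j ∈ Finset.univ.erase i, Matrix.single i j (A i j) =
        ∑ j ∈ Finset.univ.erase i, (if i = j then
          A i i • (Matrix.single i i (1 : ℂ) - Matrix.single 0 0 1) else A i j • Matrix.single i j 1) := by
      refine Finset.sum_congr rfl fun j hj => ?_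
      rw [if_neg (Finset.ne_of_mem_erase hj).symm]; simp
    rw [this]
    simp [smul_sub]; abel
  rw [e]
  refine Submodule.sum_mem _ fun i _ => Submodule.sum_mem _ fun j _ => ?_
  split_ifs with h
  · refine Submodule.smul_mem _ _ ?_
    by_cases hi : i = 0
    · subst hi; simp
    · exact single_sub_mem_span_unitary hi
  · exact Submodule.smul_mem _ _ (single_mem_span_unitary h)

/-- For unitary `K`, the hyperplane of matrices trace-orthogonal to `K` is spanned by the unitaries
it contains. -/
lemma mem_span_unitary {K A : Matrix (Fin d) (Fin d) ℂ} (hK : K ∈ Matrix.unitaryGroup (Fin d) ℂ)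
    (hA : (K * A).trace = 0) :
    A ∈ Submodule.span ℂ
      {U : Matrix (Fin d) (Fin d) ℂ | U ∈ Matrix.unitaryGroup (Fin d) ℂ ∧ (K * U).trace = 0} := by
  have h := Submodule.mem_map_of_mem (f := LinearMap.mulLeft ℂ (star K)) (traceless_mem_span hA)
  rw [Submodule.map_span] at h
  have e : LinearMap.mulLeft ℂ (star K) (K * A) = A := by
    simp [← mul_assoc, Matrix.mem_unitaryGroup_iff'.1 hK]
  rw [e] at h
  refine Submodule.span_mono ?_ h
  rintro _ ⟨U, ⟨hU, hU2⟩, rfl⟩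
  refine ⟨mul_mem (Unitary.star_mem hK) hU, ?_⟩
  simp [← mul_assoc, Matrix.mem_unitaryGroup_iff.1 hK, hU2]

end span

/-! ### Amplitudes killed by weights that kill the switch -/

section chain
variable {d M : ℕ} {c : FullQ d (M + 1) → ℂ}

/-- On unitary insertions, a weight that kills the switch amplitudes of all pairs `(A k, V)` kills
the amplitude of `c` at `(A, V)`. -/
def TUnit (c : FullQ d (M + 1) → ℂ) : Prop :=
  ∀ (w : PFq d → PFq d → ℂ) (A : Fin M → Matrix (Fin d) (Fin d) ℂ) (V : Matrix (Fin d) (Fin d) ℂ),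
    (∀ k, A k ∈ Matrix.unitaryGroup (Fin d) ℂ) → V ∈ Matrix.unitaryGroup (Fin d) ℂ →
    (∀ k, sW w (A k) V = 0) → evw c w (sn A V) = 0

lemma sW_smul (w : PFq d → PFq d → ℂ) (z : ℂ) (A V : Matrix (Fin d) (Fin d) ℂ) :
    sW w (z • A) V = z * sW w A V := by
  simp [sW_eq]

lemma sW_add_left (w w' : PFq d → PFq d → ℂ) (A V : Matrix (Fin d) (Fin d) ℂ) :
    sW (fun p f => w p f + w' p f) A V = sW w A V + sW w' A V := by
  simp [sW, add_mul, Finset.sum_add_distrib]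

/-- The switch amplitude `sW w A V` is the trace of `(W0 w * V + V * W1 w) * A`; when the first factor
is unitary, the solutions `A` are spanned by unitary ones. -/
lemma TUnit.of_unitary_sum (hc : TUnit c) (w : PFq d → PFq d → ℂ) {V : Matrix (Fin d) (Fin d) ℂ}
    (hV : V ∈ Matrix.unitaryGroup (Fin d) ℂ)
    (hK : W0 w * V + V * W1 w ∈ Matrix.unitaryGroup (Fin d) ℂ)
    (A : Fin M → Matrix (Fin d) (Fin d) ℂ) (hA : ∀ k, sW w (A k) V = 0) :
    evw c w (sn A V) = 0 := by
  rw [← evwM_apply]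
  refine ml_span (evwM c w) (fun s => {U | (s = Fin.last M → U = V) ∧ (s ≠ Fin.last M →
    U ∈ Matrix.unitaryGroup (Fin d) ℂ ∧ ((W0 w * V + V * W1 w) * U).trace = 0)}) ?_ _ ?_
  · intro Y hY
    have h1 : Y (Fin.last M) = V := (hY _).1 rfl
    rw [evwM_apply, ← sn_self Y, h1]
    refine hc w _ V (fun k => ((hY k.castSucc).2 (Fin.castSucc_ne_last k)).1) hV fun k => ?_
    rw [sW_eq]
    exact ((hY k.castSucc).2 (Fin.castSucc_ne_last k)).2
  · intro s
    refine Fin.lastCases ?_ (fun k => ?_) s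
    · exact Submodule.subset_span (by simp)
    · have := mem_span_unitary hK (A := A k) (by rw [← sW_eq]; exact hA k)
      refine Submodule.span_mono ?_ (by simpa using this)
      rintro U ⟨h1, h2⟩
      exact ⟨fun h => absurd h (Fin.castSucc_ne_last k), fun _ => ⟨h1, h2⟩⟩

lemma LinePoly.entry {E : Type*} [AddCommGroup E] [Module ℂ E]
    (f : E →ₗ[ℂ] Matrix (Fin d) (Fin d) ℂ) (i j : Fin d) : LinePoly fun z => f z i j :=
  LinePoly.linear ((Matrix.entryLinearMap ℂ ℂ i j).comp f)

lemma LinePoly.sn {E : Type*} [AddCommGroup E] [Module ℂ E]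
    {A : E → Fin M → Matrix (Fin d) (Fin d) ℂ} {V : E → Matrix (Fin d) (Fin d) ℂ}
    (hA : ∀ k i j, LinePoly fun z => A z k i j) (hV : ∀ i j, LinePoly fun z => V z i j)
    (s : Fin (M + 1)) (i j : Fin d) : LinePoly fun z => sn (A z) (V z) s i j := by
  refine Fin.lastCases ?_ (fun k => ?_) s
  · simpa using hV i j
  · simpa using hA k i j

lemma LinePoly.sW {E : Type*} [AddCommGroup E] [Module ℂ E] (w : PFq d → PFq d → ℂ)
    (A : Matrix (Fin d) (Fin d) ℂ) (f : E →ₗ[ℂ] Matrix (Fin d) (Fin d) ℂ) :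
    LinePoly fun z => sW w A (f z) := by
  have := LinePoly.linear ((Matrix.traceLinearMap (Fin d) ℂ ℂ).comp
    ((LinearMap.mulRight ℂ A).comp ((LinearMap.mulLeft ℂ (W0 w) + LinearMap.mulRight ℂ (W1 w)).comp f)))
  simpa [sW_eq] using this

/-- A version of `TUnit` without unitarity. For any `L` and `B k`, the matrix
`sW w L V • B k - sW w (B k) V • L` is killed by `sW w · V`, and depends polynomially on `w` and
`V`; density of the unitaries removes the unitarity of `W0 w * V + V * W1 w` and of `V` in turn. -/
lemma TUnit.full (hc : TUnit c) (w : PFq d → PFq d → ℂ) (V L : Matrix (Fin d) (Fin d) ℂ)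
    (B : Fin M → Matrix (Fin d) (Fin d) ℂ) :
    evw c w (sn (fun k => sW w L V • B k - sW w (B k) V • L) V) = 0 := by
  refine uzar_all V (fun V => evw c w (sn (fun k => sW w L V • B k - sW w (B k) V • L) V)) ?_ ?_
  · refine LinePoly.evw (E := Matrix (Fin d) (Fin d) ℂ) c (w := fun _ => w) (fun _ _ => LinePoly.const _)
      (LinePoly.sn (fun k i j => ?_) fun i j => ?_)
    · simp only [Matrix.sub_apply, Matrix.smul_apply, smul_eq_mul]
      exact ((LinePoly.sW w L (LinearMap.id : Matrix (Fin d) (Fin d) ℂ →ₗ[ℂ] _)).mul (LinePoly.const _)).sub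
        ((LinePoly.sW w (B k) (LinearMap.id : Matrix (Fin d) (Fin d) ℂ →ₗ[ℂ] _)).mul (LinePoly.const _))
    · exact LinePoly.entry (LinearMap.id : Matrix (Fin d) (Fin d) ℂ →ₗ[ℂ] _) i j
  · intro V hV
    -- replace the `W0` block of `w` so that `W0 V + V W1` becomes a given matrix `K`
    let wK : Matrix (Fin d) (Fin d) ℂ → PFq d → PFq d → ℂ := fun K p f =>
      if p.1 = 0 ∧ f.1 = 0 then ((K - V * W1 w) * star V) p.2 f.2 else w p f
    have hVV : star V * V = 1 := Matrix.mem_unitaryGroup_iff'.1 hV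
    have hVV' : V * star V = 1 := Matrix.mem_unitaryGroup_iff.1 hV
    have hW0 : ∀ K, W0 (wK K) = (K - V * W1 w) * star V := fun K => by ext i j; simp [W0, wK]
    have hW1 : ∀ K, W1 (wK K) = W1 w := fun K => by ext i j; simp [W1, wK]
    have hs : ∀ K, W0 (wK K) * V + V * W1 (wK K) = K := fun K => by
      rw [hW0, hW1, mul_assoc, hVV, mul_one, sub_add_cancel]
    have hself : wK (W0 w * V + V * W1 w) = w := by
      funext ⟨a, p⟩ ⟨b, f⟩
      simp only [wK]
      split_ifs with h
      · rw [add_sub_cancel_right, mul_assoc, hVV', mul_one]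
        obtain ⟨rfl, rfl⟩ := h
        rfl
      · rfl
    have key := uzar_all (W0 w * V + V * W1 w) (fun K => evw c (wK K)
      (sn (fun k => (K * L).trace • B k - (K * B k).trace • L) V)) ?_ ?_
    · simp only [hself] at key
      simp only [sW_eq]
      exact key
    · have htr : ∀ L : Matrix (Fin d) (Fin d) ℂ, LinePoly fun K => (K * L).trace := fun L =>
        LinePoly.linear ((Matrix.traceLinearMap (Fin d) ℂ ℂ).comp (LinearMap.mulRight ℂ L))
      refine LinePoly.evw c (fun p f => ?_) (LinePoly.sn (fun k i j => ?_) fun i j => LinePoly.const _)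
      · simp only [wK]
        split_ifs
        · have h1 := LinePoly.entry (LinearMap.mulRight ℂ (star V)) p.2 f.2
          have h2 := (LinePoly.const (E := Matrix (Fin d) (Fin d) ℂ) ((V * W1 w * star V) p.2 f.2))
          simpa [sub_mul] using h1.sub h2
        · exact LinePoly.const _
      · simp only [Matrix.sub_apply, Matrix.smul_apply, smul_eq_mul]
        exact ((htr L).mul (LinePoly.const _)).sub ((htr (B k)).mul (LinePoly.const _))
    · intro K hK
      refine hc.of_unitary_sum (wK K) hV (by rw [hs]; exact hK) _ fun k => ?_
      rw [sW_eq, hs, mul_sub]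
      simp [mul_comm]

lemma sW_rank_one (w : PFq d → PFq d → ℂ) (A : Matrix (Fin d) (Fin d) ℂ) (x y : Fin d → ℂ) :
    sW w A (Matrix.vecMulVec x y) =
      y ⬝ᵥ A.mulVec ((W0 w).mulVec x) + (Matrix.vecMul y (W1 w)) ⬝ᵥ A.mulVec x := by
  rw [sW_eq, Matrix.mul_vecMulVec, Matrix.vecMulVec_mul, add_mul, Matrix.vecMulVec_mul,
    Matrix.vecMulVec_mul, Matrix.trace_add, Matrix.trace_vecMulVec, Matrix.trace_vecMulVec,
    dotProduct_comm, ← Matrix.dotProduct_mulVec, dotProduct_comm x, ← Matrix.dotProduct_mulVec]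

/-- The weights with blocks `P` (both controls `0`) and `Q` (both controls `1`), zero elsewhere. -/
def blockW (P Q : Matrix (Fin d) (Fin d) ℂ) : PFq d → PFq d → ℂ := fun p f =>
  if p.1 = 0 ∧ f.1 = 0 then P p.2 f.2 else if p.1 = 1 ∧ f.1 = 1 then Q p.2 f.2 else 0

@[simp] lemma W0_blockW (P Q : Matrix (Fin d) (Fin d) ℂ) : W0 (blockW P Q) = P := by
  ext; simp [W0, blockW]

@[simp] lemma W1_blockW (P Q : Matrix (Fin d) (Fin d) ℂ) : W1 (blockW P Q) = Q := by
  ext; simp [W1, blockW]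

/-- For a nonzero rank-one operator in the last slot, the conclusion of `TUnit` holds for arbitrary
matrices in the other slots. If `sW w · V` is not identically zero this is `TUnit.full`. Otherwise
`w` is a difference of two weights for which it is nonzero and still kills all the `A k`; such a
perturbation exists by a dimension count, which uses `M ≤ d`. -/
lemma TUnit.star (hc : TUnit c) (hd : 2 ≤ d) (hM : M ≤ d) {x y : Fin d → ℂ} (hx : x ≠ 0)
    (hy : y ≠ 0) (w : PFq d → PFq d → ℂ) (A : Fin M → Matrix (Fin d) (Fin d) ℂ)
    (hA : ∀ k, sW w (A k) (Matrix.vecMulVec x y) = 0) :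
    evw c w (sn A (Matrix.vecMulVec x y)) = 0 := by
  -- the case where the functional `sW w · (x yᵀ)` is nonzero
  have nondeg : ∀ w : PFq d → PFq d → ℂ, (∀ k, sW w (A k) (Matrix.vecMulVec x y) = 0) →
      (∃ L, sW w L (Matrix.vecMulVec x y) ≠ 0) → evw c w (sn A (Matrix.vecMulVec x y)) = 0 := by
    rintro w hA ⟨L, hL⟩
    have := hc.full w (Matrix.vecMulVec x y) ((sW w L (Matrix.vecMulVec x y))⁻¹ • L) A
    simpa [sW_smul, hL, hA] using this
  by_cases hw : ∃ L, sW w L (Matrix.vecMulVec x y) ≠ 0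
  · exact nondeg w hA hw
  push Not at hw
  obtain ⟨i0, hi0⟩ := Function.ne_iff.1 hx
  obtain ⟨j0, hj0⟩ := Function.ne_iff.1 hy
  simp only [Pi.zero_apply] at hi0 hj0
  -- `2 * d` unknowns against `M + 1` equations; the equation `p i0 = 0` excludes the pairs
  -- proportional to `(x, -y)`, for which the functional below is zero
  obtain ⟨p, q, hpq, hk, hp⟩ : ∃ p q : Fin d → ℂ, ¬ (p = 0 ∧ q = 0) ∧
      (∀ k, y ⬝ᵥ (A k).mulVec p + q ⬝ᵥ (A k).mulVec x = 0) ∧ p i0 = 0 := by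
    let f : ((Fin d → ℂ) × (Fin d → ℂ)) →ₗ[ℂ] (Fin M → ℂ) × ℂ :=
      { toFun := fun pq => (fun k => y ⬝ᵥ (A k).mulVec pq.1 + pq.2 ⬝ᵥ (A k).mulVec x, pq.1 i0)
        map_add' := fun a b => by
          ext <;> simp [Matrix.mulVec_add, dotProduct_add, add_dotProduct]; ring
        map_smul' := fun z a => by
          ext <;> simp [Matrix.mulVec_smul, dotProduct_smul, smul_dotProduct]; ring }
    have hker : LinearMap.ker f ≠ ⊥ := LinearMap.ker_ne_bot_of_finrank_lt (by simp; omega)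
    obtain ⟨⟨p, q⟩, hmem, hne⟩ := (Submodule.ne_bot_iff _).1 hker
    have h0 : f (p, q) = 0 := hmem
    refine ⟨p, q, ?_, fun k => congrFun (congrArg Prod.fst h0) k, congrArg Prod.snd h0⟩
    rintro ⟨rfl, rfl⟩
    exact hne rfl
  let w' := blockW (Matrix.vecMulVec p (Pi.single i0 (x i0)⁻¹))
    (Matrix.vecMulVec (Pi.single j0 (y j0)⁻¹) q)
  have hsW : ∀ L, sW w' L (Matrix.vecMulVec x y) = y ⬝ᵥ L.mulVec p + q ⬝ᵥ L.mulVec x := by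
    intro L
    have e1 : (Matrix.vecMulVec p (Pi.single i0 (x i0)⁻¹)).mulVec x = p := by
      rw [Matrix.vecMulVec_mulVec]; simp [hi0]
    have e2 : Matrix.vecMul y (Matrix.vecMulVec (Pi.single j0 (y j0)⁻¹) q) = q := by
      rw [Matrix.vecMul_vecMulVec]; simp [hj0]
    rw [sW_rank_one, W0_blockW, W1_blockW, e1, e2]
  have hex : ∃ L, sW w' L (Matrix.vecMulVec x y) ≠ 0 := by
    by_contra hcon
    push Not at hcon
    have hK : ∀ i j, y i * p j + q i * x j = 0 := by
      intro i j
      have := hcon (Matrix.single i j 1)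
      rw [hsW] at this
      have hu : ∀ z : ℂ, Function.update (0 : Fin d → ℂ) i z = Pi.single i z := fun _ => rfl
      simpa [Matrix.single_mulVec, hu] using this
    have hq : q = 0 := by
      funext i
      have := hK i i0
      simpa [hp, hi0] using this
    refine hpq ⟨?_, hq⟩
    funext j
    simpa [hq, hj0] using hK j0 j
  have h1 := nondeg w' (fun k => by rw [hsW, hk]) hex
  have h2 := nondeg (fun p f => w p f + w' p f) (fun k => by
    rw [sW_add_left, hA, hsW, hk, add_zero]) (by
    obtain ⟨L, hL⟩ := hex
    exact ⟨L, by rw [sW_add_left, hw, zero_add]; exact hL⟩)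
  rwa [evw_add, h1, add_zero] at h2

end chain

/-! ### The trace conditions of a QC-CC, summed over extensions of a word -/

section trace
variable {d K : ℕ}

lemma sum_sum_update {ι D R : Type*} [Fintype ι] [DecidableEq ι] [Fintype D] [CommRing R] (x : ι)
    (h : (ι → D) → R) : ∑ z : ι → D, ∑ e, h (Function.update z x e) = Fintype.card D * ∑ z, h z := by
  have hinv : Function.Involutive
      (fun ze : (ι → D) × D => (Function.update ze.1 x ze.2, ze.1 x)) := by
    rintro ⟨z, e⟩; simp
  rw [← Fintype.sum_prod_type', Fintype.sum_equiv (Function.Involutive.toPerm _ hinv)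
    (fun ze : (ι → D) × D => h (Function.update ze.1 x ze.2)) (fun ze => h ze.1) (fun ze => rfl),
    Fintype.sum_prod_type]
  simp [Finset.mul_sum]

lemma sum_sum_update_snd {ι A D R : Type*} [Fintype ι] [DecidableEq ι] [Fintype A] [Fintype D]
    [CommRing R] (x : ι) (h : (ι → A × D) → R) :
    ∑ z : ι → A × D, ∑ e, h (Function.update z x ((z x).1, e)) = Fintype.card D * ∑ z, h z := by
  have hinv : Function.Involutive
      (fun ze : (ι → A × D) × D => (Function.update ze.1 x ((ze.1 x).1, ze.2), (ze.1 x).2)) := by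
    rintro ⟨z, e⟩; simp
  rw [← Fintype.sum_prod_type', Fintype.sum_equiv (Function.Involutive.toPerm _ hinv)
    (fun ze : (ι → A × D) × D => h (Function.update ze.1 x ((ze.1 x).1, ze.2))) (fun ze => h ze.1)
    (fun ze => rfl), Fintype.sum_prod_type]
  simp [Finset.mul_sum]

open Classical in
/-- The slot indices given by `q` on the range of the word `w` and by `z` elsewhere. -/
noncomputable def mg {m : ℕ} (w : Fin m → Fin K) (q z : Fin K → DD d) : Fin K → DD d :=
  fun s => if s ∈ Set.range w then q s else z s

lemma mg_update {m : ℕ} (w : Fin m → Fin K) {x : Fin K} (hx : x ∉ Set.range w)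
    (q z : Fin K → DD d) (e : DD d) :
    mg w q (Function.update z x e) =
      mg (Fin.snoc w x : Fin (m + 1) → Fin K) (Function.update q x e) z := by
  funext s
  have hr : s ∈ Set.range (Fin.snoc w x : Fin (m + 1) → Fin K) ↔ s ∈ Set.range w ∨ s = x := by
    rw [Fin.range_snoc]; simp [or_comm]
  by_cases hs : s = x
  · subst hs
    simp only [mg, hr]
    simp [hx]
  · simp only [mg, hr]
    simp [hs]

/-- Summing over the permutations starting with `w` amounts to summing over the next letter `x` and
the permutations starting with `w` followed by `x`. -/
lemma sum_ext_snoc {m : ℕ} (h : m + 2 ≤ K) (w : Fin (m + 1) → Fin K)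
    (F : Equiv.Perm (Fin K) → ℂ) :
    (∑ r : Equiv.Perm (Fin K), open Classical in
      if ∀ i, r (Fin.castLE (by omega) i) = w i then F r else 0) =
    ∑ x : Fin K, open Classical in if ∃ y, w y = x then 0 else
      ∑ r : Equiv.Perm (Fin K),
        if ∀ i, r (Fin.castLE h i) = (Fin.snoc w x : Fin (m + 2) → Fin K) i then F r else 0 := by
  classical
  have hsn : ∀ (r : Equiv.Perm (Fin K)) (x : Fin K),
      (∀ i, r (Fin.castLE h i) = (Fin.snoc w x : Fin (m + 2) → Fin K) i) ↔
        (∀ i, r (Fin.castLE (by omega) i) = w i) ∧ r (Fin.castLE h (Fin.last _)) = x := by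
    intro r x
    constructor
    · intro hr
      refine ⟨fun i => ?_, by simpa using hr (Fin.last _)⟩
      have := hr i.castSucc
      rw [Fin.snoc_castSucc] at this
      exact this
    · rintro ⟨h1, h2⟩ i
      refine Fin.lastCases ?_ (fun i => ?_) i
      · simpa using h2
      · rw [Fin.snoc_castSucc, ← h1 i]; rfl
  have e : ∀ x : Fin K, (if ∃ y, w y = x then 0 else
      ∑ r : Equiv.Perm (Fin K),
        if ∀ i, r (Fin.castLE h i) = (Fin.snoc w x : Fin (m + 2) → Fin K) i then F r else 0) =
      ∑ r : Equiv.Perm (Fin K), if r (Fin.castLE h (Fin.last _)) = x then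
        (if ∀ i, r (Fin.castLE (by omega) i) = w i then F r else 0) else 0 := by
    intro x
    split_ifs with hx
    · obtain ⟨y, rfl⟩ := hx
      symm
      refine Finset.sum_eq_zero fun r _ => ?_
      split_ifs with h1 h2
      · exfalso
        have := h1.trans (h2 y).symm
        have := congrArg Fin.val (r.injective this)
        simp at this
        have := y.2
        omega
      · rfl
      · rfl
    · refine Finset.sum_congr rfl fun r _ => ?_
      simp only [hsn]
      split_ifs <;> simp_all
  rw [Finset.sum_congr rfl fun x _ => e x, Finset.sum_comm]
  simp

/-- Let `w` be a word of length `m + 1`. The sum of `C_r` over the permutations `r` extending `w`,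
traced over `F` and all slots outside `w`, is a multiple of `C_w ⊗ 1` on the output of the last slot
of `w`. The induction is on the number of slots outside `w`. The value of the constant is not
needed. -/
lemma trace_condition {Cfam : Equiv.Perm (Fin K) → Matrix (FullQ d K) (FullQ d K) ℂ}
    {Cp : (m : ℕ) → (Fin (m + 1) → Fin K) → Matrix (PartQ d m) (PartQ d m) ℂ}
    (h2 : ∀ (r : Equiv.Perm (Fin K)) (mm : ℕ) (h : mm + 1 = K)
        (p p' : PFq d) (q q' : Fin K → DD d),
      (∑ f : PFq d, Cfam r (p, q, f) (p', q', f)) =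
        Cp mm (fun s => r (Fin.cast h s))
          (p, fun s : Fin mm => q (r (Fin.cast h s.castSucc)),
            (q (r (Fin.cast h (Fin.last mm)))).1)
          (p', fun s : Fin mm => q' (r (Fin.cast h s.castSucc)),
            (q' (r (Fin.cast h (Fin.last mm)))).1) *
        (if (q (r (Fin.cast h (Fin.last mm)))).2 = (q' (r (Fin.cast h (Fin.last mm)))).2
          then 1 else 0))
    (h3 : ∀ (mm : ℕ), mm + 2 ≤ K → ∀ (u : Fin (mm + 1) → Fin K), Function.Injective u →
      ∀ (p p' : PFq d) (g g' : Fin mm → DD d) (iL iL' : Fin d) (o o' : Fin d),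
      (∑ x : Fin K, open Classical in if ∃ y, u y = x then 0 else
          ∑ ii : Fin d, Cp (mm + 1) (Fin.snoc u x)
            (p, Fin.snoc g ((iL, o) : DD d), ii)
            (p', Fin.snoc g' ((iL', o') : DD d), ii)) =
        Cp mm u (p, g, iL) (p', g', iL') * (if o = o' then 1 else 0))
    (m : ℕ) (hm : m + 1 ≤ K) : ∃ κ : ℂ, ∀ w : Fin (m + 1) → Fin K, Function.Injective w →
      ∀ (p p' : PFq d) (q q' : Fin K → DD d),
      (∑ r : Equiv.Perm (Fin K), open Classical in
        if ∀ i, r (Fin.castLE hm i) = w i then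
          ∑ z, ∑ f, Cfam r (p, mg w q z, f) (p', mg w q' z, f) else 0) =
        κ * (Cp m w (p, fun s => q (w s.castSucc), (q (w (Fin.last m))).1)
          (p', fun s => q' (w s.castSucc), (q' (w (Fin.last m))).1) *
        if (q (w (Fin.last m))).2 = (q' (w (Fin.last m))).2 then 1 else 0) := by
  classical
  obtain ⟨k, hk⟩ := Nat.exists_eq_add_of_le hm
  induction k generalizing m with
  | zero =>
    have hK : m + 1 = K := by omega
    refine ⟨Fintype.card (Fin K → DD d), fun w hw p p' q q' => ?_⟩
    have hbij : Function.Bijective w := (Fintype.bijective_iff_injective_and_card w).2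
      ⟨hw, by simp [hK]⟩
    have hmg : ∀ q z : Fin K → DD d, mg w q z = q := by
      intro q z; funext s; simp [mg, hbij.2 s]
    let r0 : Equiv.Perm (Fin K) := (finCongr hK.symm).trans (Equiv.ofBijective w hbij)
    have hr0 : ∀ i, r0 (Fin.cast hK i) = w i := by intro i; simp [r0]
    rw [Finset.sum_eq_single r0]
    · have hr1 : ∀ i, r0 (Fin.castLE hm i) = w i := hr0
      rw [if_pos hr1]
      simp only [hmg]
      have := h2 r0 m hK p p' q q'
      simp only [hr0] at this
      rw [this]
      simp
    · intro r _ hr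
      rw [if_neg]
      intro hcon
      apply hr
      ext i
      have h1 := hcon (Fin.cast hK.symm i)
      rw [← hr0] at h1
      exact congrArg Fin.val h1
    · simp
  | succ k ih =>
    obtain ⟨κ, hκ⟩ := ih (m + 1) (by omega) (by omega)
    rcases Nat.eq_zero_or_pos d with hd | hd
    · subst hd
      exact ⟨0, fun w _ p => p.2.elim0⟩
    have hdc : (d : ℂ) ≠ 0 := by exact_mod_cast hd.ne'
    refine ⟨((d : ℂ) * d)⁻¹ * κ * d, fun w hw p p' q q' => ?_⟩
    rw [sum_ext_snoc (by omega) w]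
    rw [← h3 m (by omega) w hw p p' _ _ _ _ _ _, Finset.mul_sum]
    refine Finset.sum_congr rfl fun x _ => ?_
    split_ifs with hx
    · simp
    have hinj : Function.Injective (Fin.snoc w x : Fin (m + 2) → Fin K) := by
      rw [Fin.snoc_injective_iff]
      exact ⟨hw, fun ⟨y, hy⟩ => hx ⟨y, hy⟩⟩
    have hwx : ∀ i, w i ≠ x := fun i hi => hx ⟨i, hi⟩
    have key : ∀ r : Equiv.Perm (Fin K), ∑ z, ∑ f, Cfam r (p, mg w q z, f) (p', mg w q' z, f) =
        ((d : ℂ) * d)⁻¹ * ∑ e : DD d, ∑ z, ∑ f,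
          Cfam r (p, mg (Fin.snoc w x : Fin (m + 2) → Fin K) (Function.update q x e) z, f)
            (p', mg (Fin.snoc w x : Fin (m + 2) → Fin K) (Function.update q' x e) z, f) := by
      intro r
      have := sum_sum_update x (fun z => ∑ f, Cfam r (p, mg w q z, f) (p', mg w q' z, f))
      rw [Finset.sum_comm] at this
      simp only [mg_update w (fun ⟨y, hy⟩ => hx ⟨y, hy⟩)] at this
      rw [this]
      simp only [Fintype.card_prod, Fintype.card_fin, Nat.cast_mul]
      rw [inv_mul_cancel_left₀ (mul_ne_zero hdc hdc)]
    have e1 : (∑ r : Equiv.Perm (Fin K),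
        if ∀ i, r (Fin.castLE (by omega : m + 2 ≤ K) i) = (Fin.snoc w x : Fin (m + 2) → Fin K) i then
          ∑ z, ∑ f, Cfam r (p, mg w q z, f) (p', mg w q' z, f) else 0) =
        ((d : ℂ) * d)⁻¹ * ∑ e : DD d, ∑ r : Equiv.Perm (Fin K),
          if ∀ i, r (Fin.castLE (by omega : m + 2 ≤ K) i) =
            (Fin.snoc w x : Fin (m + 2) → Fin K) i then ∑ z, ∑ f,
          Cfam r (p, mg (Fin.snoc w x : Fin (m + 2) → Fin K) (Function.update q x e) z, f)
            (p', mg (Fin.snoc w x : Fin (m + 2) → Fin K) (Function.update q' x e) z, f) else 0 := by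
      rw [Finset.sum_comm, Finset.mul_sum]
      refine Finset.sum_congr rfl fun r _ => ?_
      split_ifs
      · rw [key r]
      · simp
    rw [e1]
    have e2 : ∀ (q : Fin K → DD d) (e : DD d),
        (fun s : Fin (m + 1) => Function.update q x e
          ((Fin.snoc w x : Fin (m + 2) → Fin K) s.castSucc)) =
        (Fin.snoc (fun s : Fin m => q (w s.castSucc))
          (((q (w (Fin.last m))).1, (q (w (Fin.last m))).2) : DD d) : Fin (m + 1) → DD d) := by
      intro q e
      funext s
      rw [Fin.snoc_castSucc, Function.update_of_ne (hwx s)]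
      refine Fin.lastCases ?_ (fun s => ?_) s
      · simp
      · simp
    have e3 : ∀ (e : DD d), _ := fun e => hκ _ hinj p p' (Function.update q x e) (Function.update q' x e)
    rw [Finset.sum_congr rfl fun e _ => e3 e]
    simp only [e2, Fin.snoc_last, Function.update_self, if_true, mul_one]
    rw [Fintype.sum_prod_type]
    simp only [Finset.sum_const, Finset.card_univ, Fintype.card_fin, nsmul_eq_mul, ← Finset.mul_sum]
    ring

end trace

/-! ### Changing the output of the last slot of a word -/

section trace
variable {d K : ℕ}

open Classical in
/-- The operators `X s` for `s` in the range of `w`, and the matrix units with indices `z s` in the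
other slots. -/
noncomputable def fillY {m : ℕ} (w : Fin m → Fin K) (X : Fin K → Matrix (Fin d) (Fin d) ℂ) (z : Fin K → DD d) :
    Fin K → Matrix (Fin d) (Fin d) ℂ :=
  fun s => if s ∈ Set.range w then X s else Matrix.single (z s).2 (z s).1 1

/-- Inserting the matrix units `z` outside `w` fixes the slot indices there to be `z`. The product on
the right still runs over all slots, with a reference index `τ` outside `w`: this avoids splitting
functions on `Fin K`. -/
lemma evM_fillY {m : ℕ} (w : Fin m → Fin K) (X : Fin K → Matrix (Fin d) (Fin d) ℂ)
    (z τ : Fin K → DD d) (c : FullQ d K → ℂ) (p f : PFq d) :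
    evM c p f (fillY w X z) =
      ∑ q : Fin K → DD d, c (p, mg w q z, f) * ∏ s, fillY w X τ s (q s).2 (q s).1 := by
  classical
  let σ : Equiv.Perm (Fin K → DD d) := Equiv.piCongrRight fun s =>
    if s ∈ Set.range w then Equiv.refl _ else Equiv.swap (τ s) (z s)
  have hs : ∀ q s, fillY w X z s (σ q s).2 (σ q s).1 = fillY w X τ s (q s).2 (q s).1 := by
    intro q s
    by_cases h : s ∈ Set.range w
    · simp only [σ, fillY, Equiv.piCongrRight_apply, Pi.map_apply, if_pos h, Equiv.refl_apply]
    · simp only [σ, fillY, Equiv.piCongrRight_apply, Pi.map_apply, if_neg h, Matrix.single_apply]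
      have e : ∀ u v : DD d, (u.2 = v.2 ∧ u.1 = v.1) ↔ v = u := fun u v => by
        rw [Prod.ext_iff, and_comm, eq_comm, @eq_comm _ u.2]
      simp only [e]
      congr 1
      rw [Equiv.swap_apply_eq_iff, Equiv.swap_apply_right]
  rw [evM_apply, ← Equiv.sum_comp σ]
  refine Finset.sum_congr rfl fun q _ => ?_
  simp only [hs]
  by_cases h0 : ∏ s, fillY w X τ s (q s).2 (q s).1 = 0
  · rw [h0]; simp
  · have : σ q = mg w q z := by
      funext s
      by_cases h : s ∈ Set.range w
      · simp only [σ, mg, Equiv.piCongrRight_apply, Pi.map_apply, if_pos h, Equiv.refl_apply]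
      · have h1 := (Finset.prod_ne_zero_iff.1 h0) s (Finset.mem_univ s)
        simp only [fillY, if_neg h, Matrix.single_apply] at h1
        have h2 : τ s = q s := by
          by_contra hne
          apply h1
          rw [if_neg]
          rintro ⟨h3, h4⟩
          exact hne (Prod.ext h4 h3)
        simp only [σ, mg, Equiv.piCongrRight_apply, Pi.map_apply, if_neg h, ← h2,
          Equiv.swap_apply_left]
    rw [this]

lemma single_span_top : Submodule.span ℂ
    {A : Matrix (Fin d) (Fin d) ℂ | ∃ i j, A = Matrix.single i j 1} = ⊤ := by
  rw [eq_top_iff]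
  rintro A -
  rw [Matrix.matrix_eq_sum_single A]
  refine Submodule.sum_mem _ fun i _ => Submodule.sum_mem _ fun j _ => ?_
  have : Matrix.single i j (A i j) = A i j • Matrix.single i j (1 : ℂ) := by simp
  rw [this]
  exact Submodule.smul_mem _ _ (Submodule.subset_span ⟨i, j, rfl⟩)

lemma evM_eq_zero_of_fillY [NeZero d] {m : ℕ} (w : Fin m → Fin K) (X Y : Fin K → Matrix (Fin d) (Fin d) ℂ)
    (c : FullQ d K → ℂ) (p f : PFq d) (h : ∀ z, evM c p f (fillY w X z) = 0)
    (hY : ∀ i, Y (w i) = X (w i)) : evM c p f Y = 0 := by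
  classical
  refine ml_span (evM c p f) (fun s => if s ∈ Set.range w then {X s} else
    {A : Matrix (Fin d) (Fin d) ℂ | ∃ i j, A = Matrix.single i j 1}) ?_ Y ?_
  · intro Y hY
    have : ∀ s, ∃ z : DD d, s ∉ Set.range w → Y s = Matrix.single z.2 z.1 1 := by
      intro s
      have := hY s
      split_ifs at this with hs
      · exact ⟨(0, 0), fun h => absurd hs h⟩
      · obtain ⟨i, j, hij⟩ := this
        exact ⟨(j, i), fun _ => hij⟩
    choose z hz using this
    have e : Y = fillY w X z := by
      funext s
      have := hY s
      by_cases hs : s ∈ Set.range w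
      · simpa [fillY, hs] using this
      · simp only [fillY, if_neg hs]; exact hz s hs
    rw [e]; exact h z
  · intro s
    by_cases hs : s ∈ Set.range w
    · simp only [if_pos hs]
      obtain ⟨i, rfl⟩ := hs
      rw [hY]; exact Submodule.subset_span rfl
    · simp only [if_neg hs, single_span_top]; trivial

/-- The permutation `r` (slot `r i` is used at step `i`) starts with the word `w`. -/
def IsExt {m : ℕ} (hm : m + 1 ≤ K) (w : Fin (m + 1) → Fin K) (r : Equiv.Perm (Fin K)) : Prop :=
  ∀ i, r (Fin.castLE hm i) = w i

lemma sum5_comm {Z P J Q Q' : Type*} [Fintype Z] [Fintype P] [Fintype J] [Fintype Q] [Fintype Q']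
    (F : Z → P → J → Q → Q' → ℂ) :
    ∑ z, ∑ f, ∑ j, ∑ q, ∑ q', F z f j q q' = ∑ q, ∑ q', ∑ z, ∑ f, ∑ j, F z f j q q' := by
  have h3 : ∀ G : Z → P → J → ℂ, ∑ z, ∑ f, ∑ j, G z f j = ∑ t : Z × P × J, G t.1 t.2.1 t.2.2 := by
    intro G; simp only [Fintype.sum_prod_type]
  simp only [h3 fun z f j => ∑ q, ∑ q', F z f j q q', h3 fun z f j => F z f j _ _]
  rw [Finset.sum_comm]
  exact Finset.sum_congr rfl fun q _ => Finset.sum_comm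

/-- The squared norm of the amplitudes obtained from `u`, summed over the extensions of `w`, in terms
of the partially traced `C_r`. -/
lemma quad_expand {Cfam B : Equiv.Perm (Fin K) → Matrix (FullQ d K) (FullQ d K) ℂ}
    (hB : ∀ r, Cfam r = star (B r) * B r) {m : ℕ} (hm : m + 1 ≤ K) (w : Fin (m + 1) → Fin K)
    (p : PFq d) (u : (Fin K → DD d) → ℂ) :
    (∑ r : Equiv.Perm (Fin K), open Classical in if IsExt hm w r then
      ∑ z, ∑ f, ∑ j, star (∑ q, B r j (p, mg w q z, f) * u q) * (∑ q, B r j (p, mg w q z, f) * u q)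
      else 0) =
    ∑ q, ∑ q', star (u q) * u q' * ∑ r : Equiv.Perm (Fin K), open Classical in
        if IsExt hm w r then ∑ z, ∑ f, Cfam r (p, mg w q z, f) (p, mg w q' z, f) else 0 := by
  classical
  have hC : ∀ r x y, Cfam r x y = ∑ j, star (B r j x) * B r j y := by
    intro r x y; rw [hB, Matrix.mul_apply]; rfl
  have e1 : ∀ q q', star (u q) * u q' * (∑ r : Equiv.Perm (Fin K),
        if IsExt hm w r then ∑ z, ∑ f, Cfam r (p, mg w q z, f) (p, mg w q' z, f) else 0) =
      ∑ r : Equiv.Perm (Fin K), if IsExt hm w r then ∑ z, ∑ f, ∑ j,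
        (star (B r j (p, mg w q z, f) * u q)) * (B r j (p, mg w q' z, f) * u q') else 0 := by
    intro q q'
    rw [Finset.mul_sum]
    refine Finset.sum_congr rfl fun r _ => ?_
    split_ifs
    · simp only [hC, Finset.mul_sum, star_mul']
      refine Finset.sum_congr rfl fun z _ => Finset.sum_congr rfl fun f _ =>
        Finset.sum_congr rfl fun j _ => ?_
      ring
    · simp
  have e2 : ∀ r : Equiv.Perm (Fin K), (if IsExt hm w r then
      ∑ z, ∑ f, ∑ j, star (∑ q, B r j (p, mg w q z, f) * u q) * (∑ q, B r j (p, mg w q z, f) * u q)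
      else 0) = ∑ q, ∑ q', if IsExt hm w r then ∑ z, ∑ f, ∑ j,
        (star (B r j (p, mg w q z, f) * u q)) * (B r j (p, mg w q' z, f) * u q') else 0 := by
    intro r
    split_ifs
    · simp only [star_sum, Finset.sum_mul_sum]
      exact sum5_comm _
    · simp
  rw [Finset.sum_congr rfl fun r _ => e2 r]
  simp only [e1]
  rw [Finset.sum_comm]
  refine Finset.sum_congr rfl fun q _ => ?_
  rw [Finset.sum_comm]

/-- The consequence of the QC-CC conditions used below: for every word `w`, the sum of `C_r` over the
extensions `r` of `w`, traced over `F` and the slots outside `w`, has the form `G ⊗ 1`, where the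
identity acts on the output of the last slot of `w` and `G` does not involve that output. -/
def TraceCond (Cfam : Equiv.Perm (Fin K) → Matrix (FullQ d K) (FullQ d K) ℂ) : Prop :=
  ∀ (m : ℕ) (hm : m + 1 ≤ K) (w : Fin (m + 1) → Fin K), Function.Injective w → ∀ p : PFq d,
    ∃ G : (Fin K → DD d) → (Fin K → DD d) → ℂ,
      (∀ q q' o o', G (Function.update q (w (Fin.last m)) ((q (w (Fin.last m))).1, o))
        (Function.update q' (w (Fin.last m)) ((q' (w (Fin.last m))).1, o')) = G q q') ∧
      ∀ q q', (∑ r : Equiv.Perm (Fin K), open Classical in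
        if IsExt hm w r then ∑ z, ∑ f, Cfam r (p, mg w q z, f) (p, mg w q' z, f) else 0) =
        G q q' * if (q (w (Fin.last m))).2 = (q' (w (Fin.last m))).2 then 1 else 0

lemma IsQCCC.traceCond {Cfam : Equiv.Perm (Fin K) → Matrix (FullQ d K) (FullQ d K) ℂ}
    (h : IsQCCC d K Cfam) : TraceCond Cfam := by
  classical
  obtain ⟨-, Cp, -, h2, -, h3, -⟩ := h
  intro m hm w hw p
  obtain ⟨κ, hκ⟩ := trace_condition h2 (by
    intro mm hmm u hu p p' g g' iL iL' o o'
    rw [← h3 mm hmm u hu]) m hm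
  refine ⟨fun q q' => κ * Cp m w (p, fun s => q (w s.castSucc), (q (w (Fin.last m))).1)
          (p, fun s => q' (w s.castSucc), (q' (w (Fin.last m))).1), ?_, fun q q' => ?_⟩
  · intro q q' o o'
    have hne : ∀ s : Fin m, w s.castSucc ≠ w (Fin.last m) := fun s h =>
      Fin.castSucc_ne_last s (hw h)
    simp [hne]
  · rw [mul_assoc, ← hκ w hw p p q q']
    refine Finset.sum_congr rfl fun r _ => ?_
    by_cases hr : IsExt hm w r
    · rw [if_pos hr, if_pos (show ∀ i, r (Fin.castLE hm i) = w i from hr)]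
    · rw [if_neg hr, if_neg (show ¬ ∀ i, r (Fin.castLE hm i) = w i from hr)]

/-- The quadratic form of `G ⊗ 1` at `a ⊗ η` is `‖a‖²` times that of `G` at `η`; the two factors `d`
come from indexing the output that `G` and `η` do not involve. -/
lemma sum_star_mul_update {t : Fin K} (G : (Fin K → DD d) → (Fin K → DD d) → ℂ)
    (hG : ∀ q q' o o', G (Function.update q t ((q t).1, o))
        (Function.update q' t ((q' t).1, o')) = G q q')
    (η : (Fin K → DD d) → ℂ) (hη : ∀ q o, η (Function.update q t ((q t).1, o)) = η q)
    (a : Fin d → ℂ) :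
    (d : ℂ) * (d * ∑ q, ∑ q', star (a (q t).2 * η q) * (a (q' t).2 * η q') *
      (G q q' * if (q t).2 = (q' t).2 then 1 else 0)) =
    (∑ o, star (a o) * a o) * ∑ q, ∑ q', star (η q) * η q' * G q q' := by
  have h1 := fun q => sum_sum_update_snd (R := ℂ) (A := Fin d) t (fun q' =>
    star (a (q t).2 * η q) * (a (q' t).2 * η q') *
      (G q q' * if (q t).2 = (q' t).2 then 1 else 0))
  have h2 := sum_sum_update_snd (R := ℂ) (A := Fin d) t (fun q => ∑ q', ∑ o',
    star (a (q t).2 * η q) * (a o' * η q') *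
      (G q q' * if (q t).2 = o' then 1 else 0))
  simp only [Fintype.card_fin] at h1 h2
  have hG1 : ∀ q q' o, G (Function.update q t ((q t).1, o)) q' = G q q' := fun q q' o => by
    have := hG q q' o (q' t).2
    simpa using this
  have hG2 : ∀ q q' o, G q (Function.update q' t ((q' t).1, o)) = G q q' := fun q q' o => by
    have := hG q q' (q t).2 o
    simpa using this
  simp only [Function.update_self, hη, hG1, hG2] at h1 h2
  rw [Finset.mul_sum]
  simp only [← h1]
  rw [← h2, Finset.mul_sum]
  refine Finset.sum_congr rfl fun q _ => ?_
  rw [Finset.sum_mul_sum]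
  refine Finset.sum_congr rfl fun o _ => Finset.sum_congr rfl fun q' _ => ?_
  simp
  ring

/-- Let `X` carry a rank-one operator with output vector `a ≠ 0` in the last slot of the word `w`. If
all amplitudes of all extensions of `w` vanish, whatever is inserted outside `w`, then they also
vanish when `a` is replaced by any other vector. By positivity the vanishing is that of the quadratic
form of `G ⊗ 1` at `a ⊗ η`, that is, of `‖a‖²` times the quadratic form of `G` at `η`. -/
lemma trace_change [NeZero d] {Cfam B : Equiv.Perm (Fin K) → Matrix (FullQ d K) (FullQ d K) ℂ}
    (hB : ∀ r, Cfam r = star (B r) * B r) (hT : TraceCond Cfam) {m : ℕ} (hm : m + 1 ≤ K)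
    (w : Fin (m + 1) → Fin K) (hw : Function.Injective w) (X : Fin K → Matrix (Fin d) (Fin d) ℂ)
    (p : PFq d) {a : Fin d → ℂ} (ha : a ≠ 0) (a' b : Fin d → ℂ)
    (h : ∀ r, IsExt hm w r → ∀ j Y,
      (∀ i, Y (w i) = Function.update X (w (Fin.last m)) (Matrix.vecMulVec a b) (w i)) →
      ∀ f, evM (B r j) p f Y = 0) :
    ∀ r, IsExt hm w r → ∀ j Y,
      (∀ i, Y (w i) = Function.update X (w (Fin.last m)) (Matrix.vecMulVec a' b) (w i)) →
      ∀ f, evM (B r j) p f Y = 0 := by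
  classical
  obtain ⟨G, hG, hsum⟩ := hT m hm w hw p
  set t := w (Fin.last m) with ht
  let τ : Fin K → DD d := fun _ => (0, 0)
  let η : (Fin K → DD d) → ℂ := fun q =>
    b (q t).1 * ∏ s ∈ Finset.univ.erase t, fillY w X τ s (q s).2 (q s).1
  have hη : ∀ q o, η (Function.update q t ((q t).1, o)) = η q := by
    intro q o
    simp only [η, Function.update_self]
    congr 1
    refine Finset.prod_congr rfl fun s hs => ?_
    rw [Function.update_of_ne (Finset.ne_of_mem_erase hs)]
  have hfill : ∀ (a : Fin d → ℂ) (c : FullQ d K → ℂ) (z f),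
      evM c p f (fillY w (Function.update X t (Matrix.vecMulVec a b)) z) =
        ∑ q, c (p, mg w q z, f) * (a (q t).2 * η q) := by
    intro a c z f
    rw [evM_fillY w _ z τ]
    refine Finset.sum_congr rfl fun q _ => ?_
    congr 1
    rw [← Finset.mul_prod_erase _ _ (Finset.mem_univ t)]
    have h1 : fillY w (Function.update X t (Matrix.vecMulVec a b)) τ t = Matrix.vecMulVec a b := by
      simp [fillY, ht]
    rw [h1, Matrix.vecMulVec_apply, mul_assoc]
    simp only [η]
    congr 2
    refine Finset.prod_congr rfl fun s hs => ?_
    simp [fillY, Finset.ne_of_mem_erase hs]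
  have hd : (d : ℂ) ≠ 0 := by exact_mod_cast NeZero.ne d
  have hq : ∀ a : Fin d → ℂ, (d : ℂ) * (d * ∑ r : Equiv.Perm (Fin K), if IsExt hm w r then
      ∑ z, ∑ f, ∑ j, star (evM (B r j) p f (fillY w (Function.update X t (Matrix.vecMulVec a b)) z))
        * evM (B r j) p f (fillY w (Function.update X t (Matrix.vecMulVec a b)) z) else 0) =
      (∑ o, star (a o) * a o) * ∑ q, ∑ q', star (η q) * η q' * G q q' := by
    intro a
    rw [← sum_star_mul_update G hG η hη a]
    simp only [hfill]
    congr 2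
    refine (quad_expand hB hm w p (fun q => a (q t).2 * η q)).trans ?_
    refine Finset.sum_congr rfl fun q _ => Finset.sum_congr rfl fun q' _ => ?_
    rw [← hsum]
  have hnorm : ∑ o, star (a o) * a o ≠ 0 := by
    intro h0
    exact ha (dotProduct_star_self_eq_zero.1 (by simpa [dotProduct, mul_comm] using h0))
  have hT0 : ∑ q, ∑ q', star (η q) * η q' * G q q' = 0 := by
    have := hq a
    rw [Finset.sum_eq_zero] at this
    · rw [mul_zero, mul_zero] at this
      exact (mul_eq_zero.1 this.symm).resolve_left hnorm
    · intro r _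
      split_ifs with hr
      · refine Finset.sum_eq_zero fun z _ => Finset.sum_eq_zero fun f _ =>
          Finset.sum_eq_zero fun j _ => ?_
        rw [h r hr j _ (fun i => by simp [fillY]) f, mul_zero]
      · rfl
  have hzero := hq a'
  rw [hT0, mul_zero, mul_eq_zero, mul_eq_zero] at hzero
  have hzero := (hzero.resolve_left hd).resolve_left hd
  have hnn : ∀ (r : Equiv.Perm (Fin K)) (z : Fin K → DD d) (f : PFq d) (j : FullQ d K), 0 ≤
    star (evM (B r j) p f (fillY w (Function.update X t (Matrix.vecMulVec a' b)) z))
        * evM (B r j) p f (fillY w (Function.update X t (Matrix.vecMulVec a' b)) z) :=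
    fun r z f j => star_mul_self_nonneg _
  intro r hr j Y hY f
  refine evM_eq_zero_of_fillY w (Function.update X t (Matrix.vecMulVec a' b)) Y _ p f ?_ hY
  intro z
  rw [Finset.sum_eq_zero_iff_of_nonneg (fun r _ => by
    split_ifs
    · exact Finset.sum_nonneg fun z _ => Finset.sum_nonneg fun f _ =>
        Finset.sum_nonneg fun j _ => hnn r z f j
    · exact le_rfl)] at hzero
  have h1 := hzero r (Finset.mem_univ r)
  rw [if_pos hr, Finset.sum_eq_zero_iff_of_nonneg (fun z _ => Finset.sum_nonneg fun f _ =>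
        Finset.sum_nonneg fun j _ => hnn r z f j)] at h1
  have h2 := h1 z (Finset.mem_univ z)
  rw [Finset.sum_eq_zero_iff_of_nonneg (fun f _ =>
        Finset.sum_nonneg fun j _ => hnn r z f j)] at h2
  have h3 := h2 f (Finset.mem_univ f)
  rw [Finset.sum_eq_zero_iff_of_nonneg (fun j _ => hnn r z f j)] at h3
  have h4 := h3 j (Finset.mem_univ j)
  simpa using h4

end trace

/-! ### From simulation to amplitudes -/

section sandwich
variable {d M : ℕ}

lemma sW_eq_sum_swVecd (w : PFq d → PFq d → ℂ) (A V : Matrix (Fin d) (Fin d) ℂ) :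
    sW w A V = ∑ x : PFq d × PFq d, w x.1 x.2 *
      ∑ io : DD d, ∑ jo : DD d, swVecd x.1 io jo x.2 * (A io.2 io.1 * V jo.2 jo.1) := by
  rw [sW, Fintype.sum_prod_type (α₁ := PFq d) (α₂ := PFq d)]
  refine Finset.sum_congr rfl fun p _ => Finset.sum_congr rfl fun f _ => ?_
  dsimp only
  congr 1
  have h1 : ∑ io : DD d, ∑ jo : DD d,
      (if p.1 = 0 ∧ f.1 = 0 ∧ p.2 = io.1 ∧ io.2 = jo.1 ∧ jo.2 = f.2 then (1 : ℂ) else 0) *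
        (A io.2 io.1 * V jo.2 jo.1) = if p.1 = 0 ∧ f.1 = 0 then (V * A) f.2 p.2 else 0 := by
    by_cases h : p.1 = 0 ∧ f.1 = 0
    · simp [h, Fintype.sum_prod_type, Matrix.mul_apply, ite_and, mul_comm]
    · have : ∀ Q : Prop, ¬ (p.1 = 0 ∧ f.1 = 0 ∧ Q) := fun Q hQ => h ⟨hQ.1, hQ.2.1⟩
      simp [h, this]
  have h2 : ∑ io : DD d, ∑ jo : DD d,
      (if p.1 = 1 ∧ f.1 = 1 ∧ p.2 = jo.1 ∧ jo.2 = io.1 ∧ io.2 = f.2 then (1 : ℂ) else 0) *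
        (A io.2 io.1 * V jo.2 jo.1) = if p.1 = 1 ∧ f.1 = 1 then (A * V) f.2 p.2 else 0 := by
    by_cases h : p.1 = 1 ∧ f.1 = 1
    · rw [Finset.sum_comm]
      simp [h, Fintype.sum_prod_type, Matrix.mul_apply, ite_and]
    · have : ∀ Q : Prop, ¬ (p.1 = 1 ∧ f.1 = 1 ∧ Q) := fun Q hQ => h ⟨hQ.1, hQ.2.1⟩
      simp [h, this]
  rw [← h1, ← h2, ← Finset.sum_add_distrib]
  refine Finset.sum_congr rfl fun io _ => ?_
  rw [← Finset.sum_add_distrib]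
  refine Finset.sum_congr rfl fun jo _ => ?_
  rw [swVecd, add_mul]

lemma star_swVecd (p : PFq d) (io jo : DD d) (f : PFq d) :
    star (swVecd p io jo f) = swVecd p io jo f := by
  unfold swVecd
  rw [star_add]
  congr 1 <;> split_ifs <;> simp

lemma evw_eq_sum (c : FullQ d (M + 1) → ℂ) (w : PFq d → PFq d → ℂ)
    (X : Fin (M + 1) → Matrix (Fin d) (Fin d) ℂ) :
    evw c w X = ∑ x : PFq d × PFq d, w x.1 x.2 * evM c x.1 x.2 X := by
  rw [evw, Fintype.sum_prod_type (α₁ := PFq d) (α₂ := PFq d)]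

lemma map_star_mem_unitary {U : Matrix (Fin d) (Fin d) ℂ} (hU : U ∈ Matrix.unitaryGroup (Fin d) ℂ) :
    U.map star ∈ Matrix.unitaryGroup (Fin d) ℂ := by
  rw [Matrix.mem_unitaryGroup_iff'] at hU ⊢
  have := congrArg (fun A => Matrix.map A (starRingEnd ℂ)) hU
  simp only [Matrix.map_mul] at this
  rw [Matrix.map_one _ (map_zero _) (map_one _)] at this
  rw [← this]
  congr 1

/-- The Choi matrix of the uniform mixture of the unitaries `conj (X k)`. The conjugates make up for
the transpose in the link product, so that the amplitudes involve the `X k` themselves. -/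
noncomputable def mixA (X : Fin M → Matrix (Fin d) (Fin d) ℂ) : Matrix (DD d) (DD d) ℂ :=
  ∑ k : Fin M, (((M : ℝ)⁻¹ : ℝ) : ℂ) •
    Matrix.vecMulVec (choiVd ((X k).map star)) (star (choiVd ((X k).map star)))

lemma mixA_apply (X : Fin M → Matrix (Fin d) (Fin d) ℂ) (q q' : DD d) :
    mixA X q q' = ∑ k, (M : ℂ)⁻¹ * (star (X k q.2 q.1) * X k q'.2 q'.1) := by
  simp [mixA, Matrix.sum_apply, Matrix.vecMulVec_apply, choiVd]

lemma mixA_isMixed (hM : 1 ≤ M) {X : Fin M → Matrix (Fin d) (Fin d) ℂ}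
    (hX : ∀ k, X k ∈ Matrix.unitaryGroup (Fin d) ℂ) : IsMixedUnitaryChoi (mixA X) := by
  have : (M : ℝ) ≠ 0 := by positivity
  exact ⟨M, fun _ => (M : ℝ)⁻¹, fun k => (X k).map star, fun _ => by positivity,
    by simp [this], fun k => map_star_mem_unitary (hX k), rfl⟩

/-- The sesquilinear form of a weighted sum of rank-one projectors. -/
lemma sandwich {κ ξ : Type*} [Fintype κ] [Fintype ξ] (l : κ → ℂ) (S : κ → ξ → ℂ) (w w' : ξ → ℂ) :
    ∑ x, ∑ y, star (w x) * w' y * ∑ k, l k * (star (S k x) * S k y) =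
      ∑ k, l k * (star (∑ x, w x * S k x) * ∑ y, w' y * S k y) := by
  simp only [star_sum, Finset.sum_mul_sum]
  simp only [Finset.mul_sum]
  rw [Finset.sum_congr rfl fun x _ => Finset.sum_comm, Finset.sum_comm]
  refine Finset.sum_congr rfl fun k _ => Finset.sum_congr rfl fun x _ =>
    Finset.sum_congr rfl fun y _ => ?_
  rw [star_mul']
  ring

lemma switchMat_mixA (X : Fin M → Matrix (Fin d) (Fin d) ℂ)
    (V : Matrix (Fin d) (Fin d) ℂ) (x y : PFq d × PFq d) :
    switchMat (mixA X)
      (Matrix.vecMulVec (choiVd (V.map star)) (star (choiVd (V.map star)))) x y =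
      ∑ k, (M : ℂ)⁻¹ * (star (∑ io : DD d, ∑ jo : DD d,
        swVecd x.1 io jo x.2 * (X k io.2 io.1 * V jo.2 jo.1)) *
        (∑ io : DD d, ∑ jo : DD d, swVecd y.1 io jo y.2 * (X k io.2 io.1 * V jo.2 jo.1))) := by
  have h := sandwich (ξ := DD d × DD d) (fun _ : Fin M => (M : ℂ)⁻¹)
    (fun k z => X k z.1.2 z.1.1 * V z.2.2 z.2.1) (fun z => swVecd x.1 z.1 z.2 x.2)
    (fun z => swVecd y.1 z.1 z.2 y.2)
  simp only [Fintype.sum_prod_type (α₁ := DD d) (α₂ := DD d)] at h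
  rw [← h, switchMat]
  refine Finset.sum_congr rfl fun io _ => ?_
  rw [Finset.sum_comm]
  refine Finset.sum_congr rfl fun jo _ => Finset.sum_congr rfl fun io' _ =>
    Finset.sum_congr rfl fun jo' _ => ?_
  rw [star_swVecd, mixA_apply, ← Complex.star_def, star_swVecd, Matrix.vecMulVec_apply,
    Finset.mul_sum, Finset.mul_sum, Finset.sum_mul]
  refine Finset.sum_congr rfl fun k _ => ?_
  simp [choiVd]
  ring

lemma switch_sandwich (w : PFq d → PFq d → ℂ) (X : Fin M → Matrix (Fin d) (Fin d) ℂ)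
    (V : Matrix (Fin d) (Fin d) ℂ) :
    ∑ x : PFq d × PFq d, ∑ y : PFq d × PFq d, star (w x.1 x.2) * w y.1 y.2 *
      switchMat (mixA X) (Matrix.vecMulVec (choiVd (V.map star)) (star (choiVd (V.map star)))) x y =
    ∑ k, (M : ℂ)⁻¹ * (star (sW w (X k) V) * sW w (X k) V) := by
  simp only [switchMat_mixA, sW_eq_sum_swVecd]
  exact sandwich (ξ := PFq d × PFq d) (fun _ : Fin M => (M : ℂ)⁻¹) _ (fun x => w x.1 x.2)
    (fun x => w x.1 x.2)

lemma linkMatMB_mixA {B : Equiv.Perm (Fin (M + 1)) → Matrix (FullQ d (M + 1)) (FullQ d (M + 1)) ℂ}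
    (X : Fin M → Matrix (Fin d) (Fin d) ℂ)
    (V : Matrix (Fin d) (Fin d) ℂ) (x y : PFq d × PFq d) :
    linkMatMB (∑ r, star (B r) * B r) (mixA X)
      (Matrix.vecMulVec (choiVd (V.map star)) (star (choiVd (V.map star)))) x y =
    ∑ t : (Equiv.Perm (Fin (M + 1)) × FullQ d (M + 1)) × (Fin M → Fin M), ((M : ℂ)⁻¹) ^ M *
      (star (evM (B t.1.1 t.1.2) x.1 x.2 (sn (fun i => X (t.2 i)) V)) *
        evM (B t.1.1 t.1.2) y.1 y.2 (sn (fun i => X (t.2 i)) V)) := by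
  rw [Fintype.sum_prod_type]
  have h : ∀ ρ : Equiv.Perm (Fin (M + 1)) × FullQ d (M + 1), _ := fun ρ =>
    sandwich (κ := Fin M → Fin M) (ξ := Fin (M + 1) → DD d) (fun _ => ((M : ℂ)⁻¹) ^ M)
      (fun t q => ∏ s, sn (fun i => X (t i)) V s (q s).2 (q s).1)
      (fun q => B ρ.1 ρ.2 (x.1, q, x.2)) (fun q => B ρ.1 ρ.2 (y.1, q, y.2))
  simp only [evM_apply]
  rw [Finset.sum_congr rfl fun ρ _ => (h ρ).symm, Finset.sum_comm, linkMatMB]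
  refine Finset.sum_congr rfl fun q _ => ?_
  rw [Finset.sum_comm]
  refine Finset.sum_congr rfl fun q' _ => ?_
  rw [← Finset.sum_mul, mul_assoc]
  congr 1
  · rw [Matrix.sum_apply, Fintype.sum_prod_type]
    rfl
  · simp only [mixA_apply]
    rw [Finset.prod_univ_sum, Fintype.piFinset_univ, Finset.sum_mul]
    refine Finset.sum_congr rfl fun t _ => ?_
    rw [Finset.prod_mul_distrib, Finset.prod_mul_distrib, Finset.prod_const, Fin.prod_univ_castSucc,
      Fin.prod_univ_castSucc]
    simp [Matrix.vecMulVec_apply, choiVd]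
    ring

lemma link_sandwich {B : Equiv.Perm (Fin (M + 1)) → Matrix (FullQ d (M + 1)) (FullQ d (M + 1)) ℂ}
    (w : PFq d → PFq d → ℂ) (X : Fin M → Matrix (Fin d) (Fin d) ℂ)
    (V : Matrix (Fin d) (Fin d) ℂ) :
    ∑ x : PFq d × PFq d, ∑ y : PFq d × PFq d, star (w x.1 x.2) * w y.1 y.2 *
      linkMatMB (∑ r, star (B r) * B r) (mixA X)
        (Matrix.vecMulVec (choiVd (V.map star)) (star (choiVd (V.map star)))) x y =
    ∑ t : (Equiv.Perm (Fin (M + 1)) × FullQ d (M + 1)) × (Fin M → Fin M), ((M : ℂ)⁻¹) ^ M *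
      (star (evw (B t.1.1 t.1.2) w (sn (fun i => X (t.2 i)) V)) *
        evw (B t.1.1 t.1.2) w (sn (fun i => X (t.2 i)) V)) := by
  simp only [linkMatMB_mixA, evw_eq_sum]
  exact sandwich (κ := (Equiv.Perm (Fin (M + 1)) × FullQ d (M + 1)) × (Fin M → Fin M))
    (ξ := PFq d × PFq d) (fun _ => ((M : ℂ)⁻¹) ^ M)
    (fun t x => evM (B t.1.1 t.1.2) x.1 x.2 (sn (fun i => X (t.2 i)) V)) (fun x => w x.1 x.2)
    (fun x => w x.1 x.2)

/-- `C` simulates the switch with `M` copies of a mixed unitary channel and one copy of a unitary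
channel. -/
def Simulates (C : Matrix (FullQ d (M + 1)) (FullQ d (M + 1)) ℂ) : Prop :=
  ∀ (A : Matrix (DD d) (DD d) ℂ) (V : Matrix (Fin d) (Fin d) ℂ),
    IsMixedUnitaryChoi A → V ∈ Matrix.unitaryGroup (Fin d) ℂ →
    linkMatMB C A (Matrix.vecMulVec (choiVd V) (star (choiVd V))) =
      switchMat A (Matrix.vecMulVec (choiVd V) (star (choiVd V)))

/-- Simulation for a uniform mixture of `X 1, …, X M`, sandwiched between a weight `w` and its
conjugate: both sides are weighted sums of squared moduli. -/
lemma Simulates.identity (hM : 1 ≤ M)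
    {B : Equiv.Perm (Fin (M + 1)) → Matrix (FullQ d (M + 1)) (FullQ d (M + 1)) ℂ}
    (h : Simulates (∑ r, star (B r) * B r)) (w : PFq d → PFq d → ℂ)
    {X : Fin M → Matrix (Fin d) (Fin d) ℂ} {V : Matrix (Fin d) (Fin d) ℂ}
    (hX : ∀ k, X k ∈ Matrix.unitaryGroup (Fin d) ℂ) (hV : V ∈ Matrix.unitaryGroup (Fin d) ℂ) :
    ∑ t : (Equiv.Perm (Fin (M + 1)) × FullQ d (M + 1)) × (Fin M → Fin M), ((M : ℂ)⁻¹) ^ M *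
      (star (evw (B t.1.1 t.1.2) w (sn (fun i => X (t.2 i)) V)) *
        evw (B t.1.1 t.1.2) w (sn (fun i => X (t.2 i)) V)) =
    ∑ k, (M : ℂ)⁻¹ * (star (sW w (X k) V) * sW w (X k) V) := by
  rw [← link_sandwich, ← switch_sandwich, h _ _ (mixA_isMixed hM hX) (map_star_mem_unitary hV)]

/-- In `Simulates.identity`, if the right side vanishes then so does each nonnegative term on the
left, in particular the one in which `X k` is inserted in slot `k` for every `k`. -/
lemma Simulates.tUnit (hM : 1 ≤ M)
    {B : Equiv.Perm (Fin (M + 1)) → Matrix (FullQ d (M + 1)) (FullQ d (M + 1)) ℂ}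
    (h : Simulates (∑ r, star (B r) * B r)) (r : Equiv.Perm (Fin (M + 1))) (j : FullQ d (M + 1)) :
    TUnit (B r j) := by
  intro w A V hA hV hs
  have h1 := h.identity hM w hA hV
  simp only [hs, mul_zero, Finset.sum_const_zero] at h1
  have hM0 : (M : ℂ) ≠ 0 := by exact_mod_cast (by omega : M ≠ 0)
  have hnn : 0 ≤ ((M : ℂ)⁻¹) ^ M := by positivity
  rw [Finset.sum_eq_zero_iff_of_nonneg
    (fun t _ => mul_nonneg hnn (star_mul_self_nonneg _))] at h1
  have h2 := h1 ((r, j), id) (Finset.mem_univ _)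
  simpa [hM0] using h2

end sandwich

/-! ### Vanishing of the two control blocks -/

section claims
variable {d K M : ℕ}

lemma evM_ext_rank_one (c : FullQ d K → ℂ) (p f : PFq d) (X : Fin K → Matrix (Fin d) (Fin d) ℂ)
    (t : Fin K) (h : ∀ a b, evM c p f (Function.update X t (Matrix.vecMulVec a b)) = 0) :
    evM c p f X = 0 := by
  have h0 : (evM c p f).toLinearMap X t = 0 := by
    refine LinearMap.ext_on (single_span_top (d := d)) ?_
    rintro _ ⟨i, j, rfl⟩
    have := h (Pi.single i 1) (Pi.single j 1)
    rw [← Matrix.single_eq_single_vecMulVec_single] at this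
    simpa using this
  have := LinearMap.congr_fun h0 (X t)
  simpa using this

lemma evw_indicator (c : FullQ d K → ℂ) (p0 f0 : PFq d) (X : Fin K → Matrix (Fin d) (Fin d) ℂ) :
    evw c (fun p f => if p = p0 ∧ f = f0 then 1 else 0) X = evM c p0 f0 X := by
  simp [evw, ite_and, Finset.sum_ite_eq']

lemma exists_ne_zero_dotProduct (hd : 2 ≤ d) (y : Fin d → ℂ) : ∃ a : Fin d → ℂ, a ≠ 0 ∧ y ⬝ᵥ a = 0 := by
  let f : (Fin d → ℂ) →ₗ[ℂ] ℂ := dotProductBilin ℂ ℂ y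
  have hker : LinearMap.ker f ≠ ⊥ := LinearMap.ker_ne_bot_of_finrank_lt (by simp; omega)
  obtain ⟨a, ha, hne⟩ := (Submodule.ne_bot_iff _).1 hker
  exact ⟨a, hne, ha⟩

lemma IsExt.symm_eq {m : ℕ} {hm : m + 1 ≤ K} {r r' : Equiv.Perm (Fin K)}
    (h : IsExt hm (fun i => r (Fin.castLE hm i)) r') {k : Fin K}
    (hk : (r'.symm k : ℕ) < m + 1 ∨ (r.symm k : ℕ) < m + 1) : r.symm k = r'.symm k := by
  rcases hk with hk | hk
  · have h2 := h ⟨r'.symm k, hk⟩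
    have h1 : Fin.castLE hm ⟨r'.symm k, hk⟩ = r'.symm k := rfl
    dsimp only at h2
    rw [h1, Equiv.apply_symm_apply] at h2
    rwa [Equiv.symm_apply_eq]
  · have h2 := h ⟨r.symm k, hk⟩
    have h1 : Fin.castLE hm ⟨r.symm k, hk⟩ = r.symm k := rfl
    dsimp only at h2
    rw [h1, Equiv.apply_symm_apply] at h2
    rw [eq_comm, Equiv.symm_apply_eq]
    exact h2.symm

lemma eq_of_isExt {α : Type*} {m : ℕ} {hm : m + 1 ≤ K} {r r' : Equiv.Perm (Fin K)}
    (h : IsExt hm (fun i => r (Fin.castLE hm i)) r') {X Y : Fin K → α}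
    (hXY : ∀ i, Y (r (Fin.castLE hm i)) = X (r (Fin.castLE hm i))) {k : Fin K}
    (hk : (r'.symm k : ℕ) < m + 1 ∨ (r.symm k : ℕ) < m + 1) : Y k = X k := by
  have hr : (r.symm k : ℕ) < m + 1 := by
    rcases hk with hk | hk
    · rwa [h.symm_eq (Or.inl hk)]
    · exact hk
  have h1 : Fin.castLE hm ⟨r.symm k, hr⟩ = r.symm k := rfl
  simpa [h1] using hXY ⟨r.symm k, hr⟩

variable {B : Equiv.Perm (Fin (M + 1)) → Matrix (FullQ d (M + 1)) (FullQ d (M + 1)) ℂ}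
  {Cfam : Equiv.Perm (Fin (M + 1)) → Matrix (FullQ d (M + 1)) (FullQ d (M + 1)) ℂ}

/-- With `x yᵀ` in the last slot, the amplitudes with input control `0` vanish as soon as `y`
annihilates the operators in the other slots among the first `N` steps. If all steps are included this
is `TUnit.star`, since the switch amplitudes `yᵀ A W x` vanish. For smaller `N`, the operator at
step `N + 1` may be taken of rank one, with an output vector that `trace_change` replaces by one
orthogonal to `y`. The induction is on the number `n` of remaining steps. -/
lemma control_zero_vanish [NeZero d] (hd : 2 ≤ d) (hMd : M ≤ d)
    (hB : ∀ r, Cfam r = star (B r) * B r)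
    (hT : TraceCond Cfam) (hU : ∀ r j, TUnit (B r j)) {x y : Fin d → ℂ} (hx : x ≠ 0) (hy : y ≠ 0)
    (p : Fin d) (n : ℕ) : ∀ N, N + n = M + 1 → ∀ (r : Equiv.Perm (Fin (M + 1))) j f
      (X : Fin (M + 1) → Matrix (Fin d) (Fin d) ℂ), (r.symm (Fin.last M) : ℕ) < N →
      X (Fin.last M) = Matrix.vecMulVec x y →
      (∀ k, k ≠ Fin.last M → (r.symm k : ℕ) < N → Matrix.vecMul y (X k) = 0) →
      evM (B r j) (0, p) f X = 0 := by
  induction n with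
  | zero =>
    intro N hN r j f X _ hV hX
    have h := (hU r j).star hd hMd hx hy
      (fun p' f' => if p' = (0, p) ∧ f' = f then 1 else 0) (fun k => X k.castSucc) (fun k => by
        rw [sW_rank_one, Matrix.dotProduct_mulVec,
          hX _ (Fin.castSucc_lt_last k).ne (by have := (r.symm k.castSucc).isLt; omega)]
        have : W1 (fun p' f' : PFq d => if p' = (0, p) ∧ f' = f then (1 : ℂ) else 0) = 0 := by
          ext; simp [W1]
        simp [this])
    rwa [← hV, sn_self, evw_indicator] at h
  | succ n ih =>
    intro N hN r j f X hlast hV hX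
    have hNM : N < M + 1 := by omega
    set t := r ⟨N, hNM⟩ with ht
    have htl : Fin.last M ≠ t := by
      intro h
      rw [h, ht, Equiv.symm_apply_apply] at hlast
      exact lt_irrefl _ hlast
    refine evM_ext_rank_one _ _ _ _ t fun a' b => ?_
    obtain ⟨a, ha, hya⟩ := exists_ne_zero_dotProduct hd y
    have hwt : r (Fin.castLE hNM (Fin.last N)) = t := rfl
    refine trace_change hB hT hNM (fun i => r (Fin.castLE hNM i))
      (r.injective.comp (Fin.castLE_injective hNM)) X (0, p) ha a' b ?_ r (fun i => rfl) j _
      (fun i => rfl) f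
    intro r' hr' j' Y hY f'
    have hpos : ∀ k, (r'.symm k : ℕ) < N + 1 →
        Y k = Function.update X t (Matrix.vecMulVec a b) k ∧ r.symm k = r'.symm k := fun k hk =>
      ⟨eq_of_isExt hr' hY (Or.inl hk), hr'.symm_eq (Or.inl hk)⟩
    have hl' : (r'.symm (Fin.last M) : ℕ) < N + 1 := by
      rw [← hr'.symm_eq (Or.inr (by omega))]; omega
    refine ih (N + 1) (by omega) r' j' f' Y hl' ?_ ?_
    · rw [(hpos _ hl').1, Function.update_of_ne htl, hV]
    · intro k hk hkN
      obtain ⟨h1, h2⟩ := hpos k hkN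
      rw [h1]
      by_cases hkt : k = t
      · rw [hkt, Function.update_self, Matrix.vecMul_vecMulVec]
        simp [hya]
      · rw [Function.update_of_ne hkt]
        refine hX k hk ?_
        have : (r.symm k : ℕ) ≠ N := by
          intro h
          apply hkt
          rw [ht, ← Equiv.symm_apply_eq]
          exact Fin.ext h
        rw [h2] at this ⊢
        omega

lemma infinite_det_ne_zero (N : Matrix (Fin d) (Fin d) ℂ) :
    {s : ℂ | (Matrix.scalar (Fin d) s + N).det ≠ 0}.Infinite := by
  have h := (Polynomial.finite_setOfPred_isRoot (Matrix.charpoly_monic (-N)).ne_zero).infinite_compl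
  refine h.mono fun s hs => ?_
  simpa [Polynomial.IsRoot, Matrix.eval_charpoly] using hs

/-- With `x yᵀ` in the last slot, the amplitudes with input control `1` vanish when the operators used
before it are annihilated by `y` on the left and by `x` on the right.

The weight selecting such an amplitude gives switch amplitudes `q ⬝ X k x`. They can be cancelled for all
`k` by adding a control-`0` weight, which contributes `y ⬝ X k v` to the switch and, by
`control_zero_vanish`, nothing to the amplitude of `B r j`. The required `v` solves a linear system
with one row `y X k` for each later slot. The system is regular for infinitely many points of the line
`X + s • D`, and the amplitude is polynomial along that line. -/
lemma control_one_vanish_same [NeZero d] (hd : 2 ≤ d) (hMd : M ≤ d)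
    (hB : ∀ r, Cfam r = star (B r) * B r)
    (hT : TraceCond Cfam) (hU : ∀ r j, TUnit (B r j)) {x y : Fin d → ℂ} (hx : x ≠ 0) (hy : y ≠ 0)
    (p : Fin d) (r : Equiv.Perm (Fin (M + 1))) (j f)
    (X : Fin (M + 1) → Matrix (Fin d) (Fin d) ℂ)
    (hV : X (Fin.last M) = Matrix.vecMulVec x y)
    (hX : ∀ k, (r.symm k : ℕ) < r.symm (Fin.last M) →
      Matrix.vecMul y (X k) = 0 ∧ (X k).mulVec x = 0) :
    evM (B r j) (1, p) f X = 0 := by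
  obtain ⟨i0, hi0⟩ := Function.ne_iff.1 hx
  obtain ⟨j0, hj0⟩ := Function.ne_iff.1 hy
  simp only [Pi.zero_apply] at hi0 hj0
  let after : Fin M → Prop := fun k => ¬ (r.symm k.castSucc : ℕ) < r.symm (Fin.last M)
  classical
  let D : Fin (M + 1) → Matrix (Fin d) (Fin d) ℂ := sn (fun k => if after k then
    Matrix.vecMulVec (Pi.single j0 (y j0)⁻¹) (Pi.single (Fin.castLE hMd k) 1) else 0) 0
  let N : Matrix (Fin d) (Fin d) ℂ := Matrix.of fun i =>
    if h : (i : ℕ) < M then Matrix.vecMul y (X (Fin.castSucc ⟨i, h⟩)) else 0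
  let q : Fin d → ℂ := Matrix.vecMul y
    (W1 fun p' f' : PFq d => if p' = (1, p) ∧ f' = f then (1 : ℂ) else 0)
  have hN : ∀ k, N (Fin.castLE hMd k) = Matrix.vecMul y (X k.castSucc) := by
    exact fun k => dif_pos k.isLt
  have hz := LinePoly.eq_zero_of_infinite (P := fun Z : Fin (M + 1) → Matrix (Fin d) (Fin d) ℂ =>
    evM (B r j) (1, p) f Z) (LinePoly.evM _ _ _ fun s i j => LinePoly.linear
      ((Matrix.entryLinearMap ℂ ℂ i j).comp (LinearMap.proj (φ := fun _ : Fin (M + 1) => Matrix (Fin d) (Fin d) ℂ) s))) X D (infinite_det_ne_zero N) ?_ 0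
  · simpa using hz
  intro s hs
  set Z := X + s • D with hZ
  have hZl : Z (Fin.last M) = Matrix.vecMulVec x y := by simp [hZ, D, hV]
  have hZb : ∀ k, (r.symm k : ℕ) < r.symm (Fin.last M) → Z k = X k := by
    intro k hk
    obtain ⟨k, rfl⟩ : ∃ k' : Fin M, k'.castSucc = k := Fin.exists_castSucc_eq.2 (by
      rintro rfl
      exact lt_irrefl _ hk)
    have hna : ¬ after k := not_not.2 hk
    simp [hZ, D, if_neg hna]
  let τ : Fin d → ℂ := fun i => if h : (i : ℕ) < M then
    -(q ⬝ᵥ (Z (Fin.castSucc ⟨i, h⟩)).mulVec x) else 0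
  obtain ⟨v, hv⟩ : ∃ v, (Matrix.scalar (Fin d) s + N).mulVec v = τ :=
    ⟨(Matrix.scalar (Fin d) s + N)⁻¹.mulVec τ, by
      rw [Matrix.mulVec_mulVec, Matrix.mul_nonsing_inv _ (isUnit_iff_ne_zero.2 hs),
        Matrix.one_mulVec]⟩
  let w1 : PFq d → PFq d → ℂ := fun p' f' => if p' = (1, p) ∧ f' = f then 1 else 0
  let w0 := blockW (Matrix.vecMulVec v (Pi.single i0 (x i0)⁻¹)) (0 : Matrix (Fin d) (Fin d) ℂ)
  have hw0 : ∀ L, sW w0 L (Matrix.vecMulVec x y) = y ⬝ᵥ L.mulVec v := by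
    intro L
    have e1 : (Matrix.vecMulVec v (Pi.single i0 (x i0)⁻¹)).mulVec x = v := by
      rw [Matrix.vecMulVec_mulVec]; simp [hi0]
    rw [sW_rank_one, W0_blockW, W1_blockW, e1]
    simp
  have hw1 : ∀ L, sW w1 L (Matrix.vecMulVec x y) = q ⬝ᵥ L.mulVec x := by
    intro L
    have : W0 w1 = 0 := by ext; simp [W0, w1]
    rw [sW_rank_one, this]
    simp [q, w1]
  have hsum := (hU r j).star hd hMd hx hy (fun p' f' => w0 p' f' + w1 p' f')
    (fun k => Z k.castSucc) (fun k => by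
      rw [sW_add_left, hw0, hw1]
      by_cases hk : after k
      · have hvk := congrFun hv (Fin.castLE hMd k)
        have hτ : τ (Fin.castLE hMd k) = -(q ⬝ᵥ (Z k.castSucc).mulVec x) := dif_pos k.isLt
        have hZk : Matrix.vecMul y (Z k.castSucc) =
            Matrix.vecMul y (X k.castSucc) + s • Pi.single (Fin.castLE hMd k) 1 := by
          simp only [hZ, D, Pi.add_apply, Pi.smul_apply, sn_castSucc, if_pos hk,
            Matrix.vecMul_add, Matrix.vecMul_smul, Matrix.vecMul_vecMulVec]
          simp [hj0]
        rw [hτ, Matrix.add_mulVec] at hvk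
        rw [Matrix.dotProduct_mulVec, hZk, add_dotProduct, smul_dotProduct, ← hN]
        have e : (Matrix.scalar (Fin d) s).mulVec v (Fin.castLE hMd k) =
            s * v (Fin.castLE hMd k) := by simp [Matrix.scalar_apply, Matrix.mulVec_diagonal]
        have e2 : N.mulVec v (Fin.castLE hMd k) = N (Fin.castLE hMd k) ⬝ᵥ v := rfl
        rw [Pi.add_apply, e, e2] at hvk
        simp only [single_dotProduct, one_mul, smul_eq_mul]
        linear_combination hvk
      · have hk' : (r.symm k.castSucc : ℕ) < r.symm (Fin.last M) := not_not.1 hk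
        rw [hZb _ hk', Matrix.dotProduct_mulVec, (hX _ hk').1, (hX _ hk').2]
        simp)
  rw [← hZl, sn_self, evw_add, evw_indicator] at hsum
  have h0 : evw (B r j) w0 Z = 0 := by
    refine Finset.sum_eq_zero fun p' _ => Finset.sum_eq_zero fun f' _ => ?_
    obtain ⟨c, p'⟩ := p'
    fin_cases c
    · refine mul_eq_zero_of_right _ (control_zero_vanish hd hMd hB hT hU hx hy p'
        (M - r.symm (Fin.last M)) (r.symm (Fin.last M) + 1) (by omega) r j f' Z (by omega) hZl ?_)
      intro k hk hkN
      have hne : (r.symm k : ℕ) ≠ r.symm (Fin.last M) := fun h =>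
        hk (r.symm.injective (Fin.ext h))
      have hlt : (r.symm k : ℕ) < r.symm (Fin.last M) := by omega
      rw [hZb k hlt]
      exact (hX k hlt).1
    · refine mul_eq_zero_of_left ?_ _
      simp [w0, blockW]
  rwa [h0, zero_add] at hsum

/-- The hypothesis makes every vector an eigenvector of `φ`, so `φ` is a scalar, equal to its value
`0` on `y0`. -/
lemma linearMap_eq_zero_of_eigen (φ : (Fin d → ℂ) →ₗ[ℂ] (Fin d → ℂ))
    (h : ∀ y π : Fin d → ℂ, π ⬝ᵥ y = 0 → π ⬝ᵥ φ y = 0) {y0 : Fin d → ℂ} (hy0 : y0 ≠ 0)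
    (h0 : φ y0 = 0) : φ = 0 := by
  have key : ∀ π : Fin d → ℂ, π ⬝ᵥ y0 ≠ 0 → ∀ y, π ⬝ᵥ φ y = 0 := by
    intro π hπ y
    have := h (y - (π ⬝ᵥ y / π ⬝ᵥ y0) • y0) π (by
      rw [dotProduct_sub, dotProduct_smul, smul_eq_mul, div_mul_cancel₀ _ hπ, sub_self])
    rwa [map_sub, map_smul, h0, smul_zero, sub_zero] at this
  obtain ⟨j0, hj0⟩ := Function.ne_iff.1 hy0
  refine LinearMap.ext fun y => ?_
  refine dotProduct_eq_zero _ fun π => ?_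
  rw [dotProduct_comm]
  by_cases hπ : π ⬝ᵥ y0 = 0
  · have h1 : (Pi.single j0 1 : Fin d → ℂ) ⬝ᵥ y0 ≠ 0 := by simpa using hj0
    have h2 := key (π + Pi.single j0 1) (by rwa [add_dotProduct, hπ, zero_add]) y
    rwa [add_dotProduct, key _ h1, add_zero] at h2
  · exact key _ hπ y

/-- `control_one_vanish_same` for an arbitrary operator in the last slot, with any fixed `x0`, `y0`.
By `trace_change` the output vector `x0` of the last slot can be replaced by any `x`. The amplitude at
`x yᵀ` is then linear in `y` and vanishes at `y0`; pairing its components with any `π ⟂ y` gives a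
weight that kills the switch, so `linearMap_eq_zero_of_eigen` applies. -/
lemma control_one_vanish [NeZero d] (hd : 2 ≤ d) (hMd : M ≤ d)
    (hB : ∀ r, Cfam r = star (B r) * B r)
    (hT : TraceCond Cfam) (hU : ∀ r j, TUnit (B r j)) {x0 y0 : Fin d → ℂ} (hx0 : x0 ≠ 0)
    (hy0 : y0 ≠ 0) (p : Fin d) (r : Equiv.Perm (Fin (M + 1))) (j f)
    (X : Fin (M + 1) → Matrix (Fin d) (Fin d) ℂ)
    (hX : ∀ k, (r.symm k : ℕ) < r.symm (Fin.last M) →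
      Matrix.vecMul y0 (X k) = 0 ∧ (X k).mulVec x0 = 0) :
    evM (B r j) (1, p) f X = 0 := by
  have hm : (r.symm (Fin.last M) : ℕ) + 1 ≤ M + 1 := (r.symm (Fin.last M)).isLt
  have hwl : r (Fin.castLE hm (Fin.last _)) = Fin.last M := by
    have : Fin.castLE hm (Fin.last _) = r.symm (Fin.last M) := rfl
    rw [this, Equiv.apply_symm_apply]
  -- the output vector of the last slot is free, by the trace condition
  have h2 : ∀ x p, evM (B r j) (1, p) f (Function.update X (Fin.last M) (Matrix.vecMulVec x y0)) = 0 := by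
    intro x p
    have := trace_change hB hT hm (fun i => r (Fin.castLE hm i))
      (r.injective.comp (Fin.castLE_injective hm)) X (1, p) hx0 x y0 ?_ r (fun i => rfl) j
      (Function.update X (Fin.last M) (Matrix.vecMulVec x y0)) (fun i => by rw [hwl]) f
    · exact this
    intro r' hr' j' Y hY f'
    rw [hwl] at hY
    have hl : r.symm (Fin.last M) = r'.symm (Fin.last M) := hr'.symm_eq (Or.inr (by omega))
    refine control_one_vanish_same hd hMd hB hT hU hx0 hy0 p r' j' f' Y ?_ ?_
    · rw [eq_of_isExt hr' hY (Or.inr (by omega)), Function.update_self]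
    · intro k hk
      rw [← hl] at hk
      have hkr : r.symm k = r'.symm k := hr'.symm_eq (Or.inl (by omega))
      rw [eq_of_isExt hr' hY (Or.inl (by omega)), Function.update_of_ne]
      · exact hX k (by rwa [hkr])
      · rintro rfl
        rw [hl] at hk
        exact lt_irrefl _ hk
  refine evM_ext_rank_one _ _ _ _ (Fin.last M) fun x y => ?_
  by_cases hx : x = 0
  · simp [hx, MultilinearMap.map_update_zero]
  let L : (Fin d → ℂ) →ₗ[ℂ] Matrix (Fin d) (Fin d) ℂ :=
    { toFun := fun y => Matrix.vecMulVec x y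
      map_add' := fun y y' => Matrix.vecMulVec_add x y y'
      map_smul' := fun c y => by simp [Matrix.vecMulVec_smul] }
  let φ : (Fin d → ℂ) →ₗ[ℂ] (Fin d → ℂ) := LinearMap.pi fun p =>
    ((evM (B r j) (1, p) f).toLinearMap X (Fin.last M)).comp L
  have hφ : ∀ y p, φ y p = evM (B r j) (1, p) f
    (Function.update X (Fin.last M) (Matrix.vecMulVec x y)) := fun y p => rfl
  rw [← hφ, linearMap_eq_zero_of_eigen φ ?_ hy0 (funext fun p => h2 x p)]
  · rfl
  intro y π hπ
  by_cases hy : y = 0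
  · simp [hy]
  have h := (hU r j).star hd hMd hx hy (fun p' f' => if p'.1 = 1 ∧ f' = f then π p'.2 else 0)
    (fun k => X k.castSucc) (fun k => by
      have e0 : W0 (fun p' f' : PFq d => if p'.1 = 1 ∧ f' = f then π p'.2 else 0) = 0 := by
        ext; simp [W0]
      have e1 : Matrix.vecMul y
          (W1 (fun p' f' : PFq d => if p'.1 = 1 ∧ f' = f then π p'.2 else 0)) = 0 := by
        funext i
        by_cases hf : (1, i) = f
        · simpa [W1, Matrix.vecMul, hf, dotProduct_comm] using hπ
        · simp [W1, Matrix.vecMul, hf, dotProduct]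
      rw [sW_rank_one, e0, e1]
      simp)
  have hs : sn (fun k => X k.castSucc) (Matrix.vecMulVec x y) =
      Function.update X (Fin.last M) (Matrix.vecMulVec x y) := by
    funext s
    refine Fin.lastCases ?_ (fun k => ?_) s
    · simp
    · simp
  rw [hs] at h
  rw [← h, evw, Fintype.sum_prod_type]
  simp [dotProduct, hφ, ite_and]

end claims

/-! ### The contradiction -/

section final
variable {d M : ℕ}
  {B : Equiv.Perm (Fin (M + 1)) → Matrix (FullQ d (M + 1)) (FullQ d (M + 1)) ℂ}
  {Cfam : Equiv.Perm (Fin (M + 1)) → Matrix (FullQ d (M + 1)) (FullQ d (M + 1)) ℂ}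

lemma exists_ne_zero_forall_dotProduct {ι : Type*} [Fintype ι] (h : Fintype.card ι < d)
    (b : ι → Fin d → ℂ) : ∃ x : Fin d → ℂ, x ≠ 0 ∧ ∀ i, b i ⬝ᵥ x = 0 := by
  let f : (Fin d → ℂ) →ₗ[ℂ] (ι → ℂ) := LinearMap.pi fun i => dotProductBilin ℂ ℂ (b i)
  have hker : LinearMap.ker f ≠ ⊥ := LinearMap.ker_ne_bot_of_finrank_lt (by simpa using h)
  obtain ⟨a, ha, hne⟩ := (Submodule.ne_bot_iff _).1 hker
  exact ⟨a, hne, fun i => congrFun ha i⟩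

/-- When `M ≤ d - 1`, the `M` matrix units in the first slots always leave a common `x0` and `y0` that
they annihilate, so `control_one_vanish` kills the whole control-`1` block. -/
lemma control_one_eq_zero [NeZero d] (hd : 2 ≤ d) (hMd : M ≤ d - 1)
    (hB : ∀ r, Cfam r = star (B r) * B r)
    (hT : TraceCond Cfam) (hU : ∀ r j, TUnit (B r j)) (p : Fin d) (r j f)
    (X : Fin (M + 1) → Matrix (Fin d) (Fin d) ℂ) : evM (B r j) (1, p) f X = 0 := by
  refine ml_span (evM (B r j) (1, p) f) (fun _ =>
    {A : Matrix (Fin d) (Fin d) ℂ | ∃ i j, A = Matrix.single i j 1}) ?_ X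
    (fun s => by rw [single_span_top]; trivial)
  intro Y hY
  choose a b hab using hY
  have hcard : Fintype.card (Fin M) < d := by simp; omega
  obtain ⟨x0, hx0, hbx⟩ := exists_ne_zero_forall_dotProduct hcard
    (fun k => (Pi.single (b k.castSucc) 1 : Fin d → ℂ))
  obtain ⟨y0, hy0, hay⟩ := exists_ne_zero_forall_dotProduct hcard
    (fun k => (Pi.single (a k.castSucc) 1 : Fin d → ℂ))
  refine control_one_vanish hd (by omega) hB hT hU hx0 hy0 p r j f Y ?_
  intro k hk
  obtain ⟨k, rfl⟩ : ∃ k' : Fin M, k'.castSucc = k := Fin.exists_castSucc_eq.2 (by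
    rintro rfl
    exact lt_irrefl _ hk)
  rw [hab, Matrix.single_eq_single_vecMulVec_single, Matrix.vecMul_vecMulVec,
    Matrix.vecMulVec_mulVec, hbx, dotProduct_comm, hay]
  simp

/-- When `M = d = 2`, let `Φ A` be the control-`1` block of amplitudes at `(A, A, 1)`. It vanishes at
the two diagonal matrix units, so the parallelogram identity gives `Φ 1 + Φ Z = 0` for
`Z = diag(1, -1)`. The weights `(1, -1)` and `(1, 1)` kill the switch at `1` and `Z` respectively, so the
rows of `Φ 1` have equal sums and those of `Φ Z` have opposite sums. Hence both sums of `Φ 1` are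
zero. -/
lemma column_sum_eq_zero_qubit
    {B Cfam : Equiv.Perm (Fin 3) → Matrix (FullQ 2 3) (FullQ 2 3) ℂ}
    (hB : ∀ r, Cfam r = star (B r) * B r)
    (hT : TraceCond Cfam) (hU : ∀ r j, TUnit (M := 2) (B r j)) (r j) :
    ∑ p : Fin 2, evM (B r j) (1, p) (1, 0) (fun _ => 1) = 0 := by
  have hsn : ∀ A V : Matrix (Fin 2) (Fin 2) ℂ, sn (fun _ : Fin 2 => A) V = ![A, A, V] := by
    intro A V
    funext s
    fin_cases s <;> rfl
  have hE : ∀ i p f, evM (B r j) (1, p) f ![Matrix.single i i 1, Matrix.single i i 1, 1] = 0 := by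
    intro i p f
    have hne : (Pi.single (i + 1) 1 : Fin 2 → ℂ) ≠ 0 := by simp
    have h1 : Matrix.vecMul (Pi.single (i + 1) 1) (Matrix.single i i (1 : ℂ)) = 0 := by
      ext k; fin_cases i <;> fin_cases k <;> simp
    have h2 : (Matrix.single i i (1 : ℂ)).mulVec (Pi.single (i + 1) 1) = 0 := by
      ext k; fin_cases i <;> fin_cases k <;> simp
    refine control_one_vanish (M := 2) le_rfl le_rfl hB hT hU hne hne p r j f _ ?_
    intro k hk
    fin_cases k
    · exact ⟨h1, h2⟩
    · exact ⟨h1, h2⟩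
    · exact absurd hk (lt_irrefl _)
  let Z : Matrix (Fin 2) (Fin 2) ℂ := Matrix.single 0 0 1 - Matrix.single 1 1 1
  have h1e : (1 : Matrix (Fin 2) (Fin 2) ℂ) = Matrix.single 0 0 1 + Matrix.single 1 1 1 := by
    ext a b; fin_cases a <;> fin_cases b <;> simp
  have hadd : ∀ p f, evM (B r j) (1, p) f ![1, 1, 1] + evM (B r j) (1, p) f ![Z, Z, 1] = 0 := by
    intro p f
    have key : ∀ A A' C : Matrix (Fin 2) (Fin 2) ℂ,
        evM (B r j) (1, p) f ![A + A', A + A', C] + evM (B r j) (1, p) f ![A - A', A - A', C] =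
        2 * (evM (B r j) (1, p) f ![A, A, C] + evM (B r j) (1, p) f ![A', A', C]) := by
      intro A A' C
      simp only [evM_apply, ← Finset.sum_add_distrib, Finset.mul_sum]
      refine Finset.sum_congr rfl fun q _ => ?_
      simp only [Fin.prod_univ_three, Matrix.cons_val_zero, Matrix.cons_val_one,
        show ∀ A B C : Matrix (Fin 2) (Fin 2) ℂ, (![A, B, C] : Fin 3 → _) 2 = C from
          fun _ _ _ => rfl, Matrix.add_apply, Matrix.sub_apply]
      ring
    have := key (Matrix.single 0 0 1) (Matrix.single 1 1 1) 1
    rwa [hE, hE, add_zero, mul_zero, ← h1e] at this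
  have hZ : Z ∈ Matrix.unitaryGroup (Fin 2) ℂ := by
    rw [Matrix.mem_unitaryGroup_iff]
    ext a b; fin_cases a <;> fin_cases b <;> simp [Z, Matrix.mul_apply, Matrix.star_apply]
  have hα : ∀ (α : Fin 2 → ℂ) A, A ∈ Matrix.unitaryGroup (Fin 2) ℂ →
      (∑ p, ∑ f, α f * A f p = 0) →
      ∑ p, ∑ f, α f * evM (B r j) (1, p) (1, f) ![A, A, 1] = 0 := by
    intro α A hA h
    have := hU r j (fun p f => if p.1 = 1 ∧ f.1 = 1 then α f.2 else 0) (fun _ => A) 1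
      (fun _ => hA) (one_mem _) (fun _ => by
        rw [sW]
        simpa [Fintype.sum_prod_type, -Fin.sum_univ_two, ite_and] using h)
    rw [hsn] at this
    simpa [evw, Fintype.sum_prod_type, ite_and] using this
  have e1 := hα ![1, -1] 1 (one_mem _) (by simp)
  have e2 := hα ![1, 1] Z hZ (by simp [Z])
  have hone : (fun _ : Fin 3 => (1 : Matrix (Fin 2) (Fin 2) ℂ)) = ![1, 1, 1] := by
    funext s; fin_cases s <;> rfl
  rw [hone]
  simp only [Fin.sum_univ_two, Matrix.cons_val_zero, Matrix.cons_val_one, one_mul, neg_one_mul]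
    at e1 e2 ⊢
  linear_combination (e1 - e2 + hadd 0 (1, 0) + hadd 1 (1, 0) + hadd 0 (1, 1) + hadd 1 (1, 1)) / 2

/-- The weight summing over the inputs `(1, p)` with output `(1, 0)` has switch amplitude `1` when
identities are inserted, so not all the corresponding amplitudes of the process can vanish. -/
lemma not_simulates [NeZero d] (hM : 1 ≤ M)
    (hM0 : ∀ r j, ∑ p : Fin d, evM (B r j) (1, p) (1, 0) (fun _ => 1) = 0) :
    ¬ Simulates (∑ r, star (B r) * B r) := by
  intro h
  have hs : sn (fun _ : Fin M => (1 : Matrix (Fin d) (Fin d) ℂ)) 1 = fun _ => 1 := by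
    funext s
    refine Fin.lastCases ?_ (fun k => ?_) s <;> simp
  have hid := h.identity hM (fun p f => if p.1 = 1 ∧ f = (1, 0) then 1 else 0)
    (X := fun _ => 1) (V := 1) (fun _ => one_mem _) (one_mem _)
  have hL : ∀ r j, evw (B r j) (fun p f => if p.1 = 1 ∧ f = (1, 0) then 1 else 0)
      (fun _ => 1) = 0 := by
    intro r j
    rw [evw, Fintype.sum_prod_type, Fin.sum_univ_two, Finset.sum_eq_zero (by simp), zero_add]
    simpa using hM0 r j
  have hR : sW (fun p f => if p.1 = 1 ∧ f = (1, 0) then 1 else 0)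
      (1 : Matrix (Fin d) (Fin d) ℂ) 1 = 1 := by
    rw [sW]
    simp [Fintype.sum_prod_type, ite_and, Matrix.one_apply]
  simp only [hs, hL, hR, mul_zero, Finset.sum_const_zero] at hid
  have : (M : ℂ) ≠ 0 := by exact_mod_cast (by omega : M ≠ 0)
  simp [this] at hid

open scoped MatrixOrder in
lemma exists_eq_star_mul_self {n : Type*} [Fintype n] [DecidableEq n] {A : Matrix n n ℂ}
    (hA : A.PosSemidef) : ∃ B, A = star B * B :=
  CStarAlgebra.nonneg_iff_eq_star_mul_self.mp hA.nonneg

theorem not_isQCCC_simulates (hd : 2 ≤ d) (hM : 1 ≤ M) (h : M ≤ d - 1 ∨ (M = 2 ∧ d = 2))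
    (hC : IsQCCC d (M + 1) Cfam) : ¬ Simulates (∑ r, Cfam r) := by
  have : NeZero d := ⟨by omega⟩
  choose B hB using fun r => exists_eq_star_mul_self (hC.1 r)
  have hT := hC.traceCond
  intro hS
  have hS' : Simulates (∑ r, star (B r) * B r) := by simpa only [← hB] using hS
  have hU := hS'.tUnit hM
  refine not_simulates hM ?_ hS'
  intro r j
  rcases h with h | ⟨rfl, rfl⟩
  · exact Finset.sum_eq_zero fun p _ => control_one_eq_zero hd h hB hT hU p r j _ _
  · exact column_sum_eq_zero_qubit hB hT hU r j

end final

theorem stmt_0 (n M : ℕ) (hn : 1 ≤ n) (hM : 1 ≤ M) (hMb : M ≤ max 2 (2 ^ n - 1)) :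
    ¬ ∃ Cfam : Equiv.Perm (Fin (M + 1)) →
        Matrix (FullQ (2 ^ n) (M + 1)) (FullQ (2 ^ n) (M + 1)) ℂ,
      IsQCCC (2 ^ n) (M + 1) Cfam ∧
      ∀ (A : Matrix (DD (2 ^ n)) (DD (2 ^ n)) ℂ)
        (V : Matrix (Fin (2 ^ n)) (Fin (2 ^ n)) ℂ),
        IsMixedUnitaryChoi A → V ∈ Matrix.unitaryGroup (Fin (2 ^ n)) ℂ →
        linkMatMB (∑ r, Cfam r) A (Matrix.vecMulVec (choiVd V) (star (choiVd V))) =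
          switchMat A (Matrix.vecMulVec (choiVd V) (star (choiVd V))) := by
  rintro ⟨Cfam, hC, hS⟩
  have hd : 2 ≤ 2 ^ n := by
    calc 2 = 2 ^ 1 := rfl
      _ ≤ 2 ^ n := Nat.pow_le_pow_right (by norm_num) hn
  refine not_isQCCC_simulates hd hM ?_ hC hS
  rw [le_max_iff] at hMb
  omega
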